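/- arXiv:1403.5353 — 2 statements merged into one kernel-verified Lean document; each statement's English description precedes it below -/
import Mathlib

section
/- Let χ ∈ C_c^∞(ℝ) be supported in an interval of length c₁/12. There exists a constant B > 0, depending only on ρ, χ, A, N, C₁ and c₁, with the following property. Let Q ∈ C^N([1/4,4]) be real-valued with |Q^{(j)}(t)| ≤ C₁ for all 0 ≤ j ≤ N and |Q″(t)| ≥ c₁ for all t ∈ [1/4,4]. Then at least one of the following two statements holds: (1) |χ(−ξ/η) I_Q(λ,ξ,η)| ≤ B λ^{−(N−1)} for all λ > 1, ξ ∈ ℝ and η ≠ 0; (2) for every pair (ξ,η) with η ≠ 0 and −ξ/η ∈ supp χ there exists a unique t(ξ,η) ∈ [1/3, 13/6] with Q′(t(ξ,η)) = −ξ/η, the map (ξ,η) ↦ t(ξ,η) is (N−1) times continuously differentiable on {(ξ,η) : η ≠ 0, −ξ/η ∈ supp χ}, and, with c = e^{i·sgn(Q″)·π/4} (2π)^{1/2} (sgn(Q″) being the constant sign of Q″ on [1/4,4]), for all λ > 1 and all such (ξ,η): |χ(−ξ/η) I_Q(λ,ξ,η) − c · χ(−ξ/η) · 1_{[−A,A]}(ξ/η)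 · ρ(t(ξ,η)) · |Q″(t(ξ,η))|^{−1/2} · e^{iλφ_Q(t(ξ,η),ξ,η)} · λ^{−1/2}| ≤ B λ^{−3/2}. -/
open MeasureTheory Real Set

noncomputable section

/-- The phase `φ_Q(t,ξ,η) = Q(t) + (ξ/η) t`. -/
def phaseQ (Q : ℝ → ℝ) (t ξ η : ℝ) : ℝ := Q t + (ξ / η) * t

/-- `I_Q(λ,ξ,η) = 1_{[-A,A]}(ξ/η) ∫_0^∞ ρ(t) e^{iλφ_Q(t,ξ,η)} dt`. -/
def oscI (ρ Q : ℝ → ℝ) (A lam ξ η : ℝ) : ℂ :=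
  Set.indicator (Set.Icc (-A) A) (fun _ => (1 : ℂ)) (ξ / η) *
    ∫ t in Set.Ioi (0 : ℝ), (ρ t : ℂ) * Complex.exp (Complex.I * lam * phaseQ Q t ξ η)

/-!
Put `v = -ξ/η`, so that the phase is `Q(t) - vt`. As `Q''` has a constant sign and `|Q''| ≥ c₁`,
the function `Q'` moves by at least `c₁/6` between `supp ρ` and either end of `[1/3, 13/6]`, twice
the length allowed for `supp χ`. Hence either `Q'` keeps a distance `c₁/12` from `supp χ` on
`supp ρ`, and `N - 1` integrations by parts give `λ^{-(N-1)}`, or `Q'` takes all values of `supp χ`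
on `[1/3, 13/6]`.

In the second case write the phase, up to its critical value, as `±y²/2` with `y` smooth. With `a`
chosen so that both sides agree at the critical point, the amplitude is `a y' e^{-y²/2}` plus a
smooth multiple of the derivative of the phase. The first term integrates to a Gaussian integral
with complex parameter, which equals the Fresnel integral up to `O(λ^{-3/2})`. Integrating the
second by parts gains `λ^{-1}`, and van der Corput's bound supplies the remaining `λ^{-1/2}`.

To obtain constants independent of `Q` and `v`, everything is carried out for families of functions
whose derivatives are bounded uniformly in the index.
-/

open Filter Topology

/-- The real functions `F i` are bounded on `Ω`, uniformly in the index `i`. -/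
def UnifBddOn {ι : Type*} (F : ι → ℝ → ℝ) (Ω : Set ℝ) : Prop :=
  ∃ M : ℝ, ∀ i, ∀ t ∈ Ω, |F i t| ≤ M

/-- The real functions `F i` are of class `C^n` on `Ω`, with derivatives up to order `n` bounded
on `Ω` uniformly in the index `i`. Derivatives are two-sided, so `Ω` is meant to be open. -/
def UnifContDiffOn {ι : Type*} : ℕ → (ι → ℝ → ℝ) → Set ℝ → Prop
  | 0, F, Ω => UnifBddOn F Ω ∧ ∀ i, ContinuousOn (F i) Ω
  | n + 1, F, Ω => UnifBddOn F Ω ∧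
      ∃ F' : ι → ℝ → ℝ, (∀ i, ∀ t ∈ Ω, HasDerivAt (F i) (F' i t) t) ∧ UnifContDiffOn n F' Ω

section UniformFamilies

variable {ι : Type*} {Ω : Set ℝ} {F G : ι → ℝ → ℝ} {n : ℕ}

lemma UnifBddOn.exists_nonneg (h : UnifBddOn F Ω) :
    ∃ M : ℝ, 0 ≤ M ∧ ∀ i, ∀ t ∈ Ω, |F i t| ≤ M := by
  obtain ⟨M, hM⟩ := h
  exact ⟨|M|, abs_nonneg M, fun i t ht => (hM i t ht).trans (le_abs_self M)⟩

lemma UnifBddOn.add (hF : UnifBddOn F Ω) (hG : UnifBddOn G Ω) :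
    UnifBddOn (fun i t => F i t + G i t) Ω := by
  obtain ⟨M, hM⟩ := hF
  obtain ⟨K, hK⟩ := hG
  exact ⟨M + K, fun i t ht => (abs_add_le _ _).trans (add_le_add (hM i t ht) (hK i t ht))⟩

lemma UnifBddOn.mul (hF : UnifBddOn F Ω) (hG : UnifBddOn G Ω) :
    UnifBddOn (fun i t => F i t * G i t) Ω := by
  obtain ⟨M, hM0, hM⟩ := hF.exists_nonneg
  obtain ⟨K, hK⟩ := hG
  refine ⟨M * K, fun i t ht => ?_⟩
  rw [abs_mul]
  exact mul_le_mul (hM i t ht) (hK i t ht) (abs_nonneg _) hM0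

namespace UnifContDiffOn

lemma unifBddOn (h : UnifContDiffOn n F Ω) : UnifBddOn F Ω := by
  cases n <;> exact h.1

lemma continuousOn (h : UnifContDiffOn n F Ω) (i : ι) : ContinuousOn (F i) Ω := by
  cases n with
  | zero => exact h.2 i
  | succ n =>
    obtain ⟨-, F', hF', -⟩ := h
    exact HasDerivAt.continuousOn (hF' i)

lemma of_succ (h : UnifContDiffOn (n + 1) F Ω) : UnifContDiffOn n F Ω := by
  induction n generalizing F with
  | zero => exact ⟨h.unifBddOn, h.continuousOn⟩
  | succ n ih =>
    obtain ⟨hb, F', hF', h'⟩ := h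
    exact ⟨hb, F', hF', ih h'⟩

lemma of_le {k : ℕ} (h : UnifContDiffOn n F Ω) (hk : k ≤ n) : UnifContDiffOn k F Ω := by
  induction hk with
  | refl => exact h
  | step _ ih => exact ih h.of_succ

lemma const {c : ι → ℝ} (hc : ∃ M, ∀ i, |c i| ≤ M) : UnifContDiffOn n (fun i _ => c i) Ω := by
  obtain ⟨M, hM⟩ := hc
  induction n generalizing c M with
  | zero => exact ⟨⟨M, fun i _ _ => hM i⟩, fun i => continuousOn_const⟩
  | succ n ih =>
    exact ⟨⟨M, fun i _ _ => hM i⟩, fun _ _ => 0, fun i t _ => hasDerivAt_const t (c i),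
      ih (c := fun _ => 0) 0 (fun _ => abs_zero.le)⟩

lemma add (hF : UnifContDiffOn n F Ω) (hG : UnifContDiffOn n G Ω) :
    UnifContDiffOn n (fun i t => F i t + G i t) Ω := by
  induction n generalizing F G with
  | zero => exact ⟨hF.1.add hG.1, fun i => (hF.2 i).add (hG.2 i)⟩
  | succ n ih =>
    obtain ⟨hFb, F', hF', hF''⟩ := hF
    obtain ⟨hGb, G', hG', hG''⟩ := hG
    exact ⟨hFb.add hGb, _, fun i t ht => (hF' i t ht).add (hG' i t ht), ih hF'' hG''⟩

lemma mul (hF : UnifContDiffOn n F Ω) (hG : UnifContDiffOn n G Ω) :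
    UnifContDiffOn n (fun i t => F i t * G i t) Ω := by
  induction n generalizing F G with
  | zero => exact ⟨hF.1.mul hG.1, fun i => (hF.2 i).mul (hG.2 i)⟩
  | succ n ih =>
    have hF₀ := hF.of_succ
    have hG₀ := hG.of_succ
    obtain ⟨hFb, F', hF', hF''⟩ := hF
    obtain ⟨hGb, G', hG', hG''⟩ := hG
    exact ⟨hFb.mul hGb, _, fun i t ht => (hF' i t ht).mul (hG' i t ht),
      (ih hF'' hG₀).add (ih hF₀ hG'')⟩

lemma sub (hF : UnifContDiffOn n F Ω) (hG : UnifContDiffOn n G Ω) :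
    UnifContDiffOn n (fun i t => F i t - G i t) Ω := by
  have h := hF.add ((const (c := fun _ => -1) ⟨1, fun _ => by simp⟩).mul hG)
  simpa only [neg_mul, one_mul, ← sub_eq_add_neg] using h

lemma comp {Φ : ℝ → ℝ} {U S : Set ℝ} (hU : IsOpen U) (hS : IsCompact S) (hSU : S ⊆ U)
    (hΦ : ContDiffOn ℝ n Φ U) (hF : UnifContDiffOn n F Ω) (hFS : ∀ i, ∀ t ∈ Ω, F i t ∈ S) :
    UnifContDiffOn n (fun i t => Φ (F i t)) Ω := by
  have hb : UnifBddOn (fun i t => Φ (F i t)) Ω := by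
    obtain ⟨M, hM⟩ := hS.exists_bound_of_continuousOn (hΦ.continuousOn.mono hSU)
    exact ⟨M, fun i t ht => hM _ (hFS i t ht)⟩
  induction n generalizing Φ with
  | zero => exact ⟨hb, fun i => hΦ.continuousOn.comp (hF.2 i) fun t ht => hSU (hFS i t ht)⟩
  | succ n ih =>
    have hF₀ := hF.of_succ
    obtain ⟨-, F', hF', hF''⟩ := hF
    obtain ⟨hdiff, -, hderiv⟩ :=
      (contDiffOn_succ_iff_deriv_of_isOpen (n := n) hU).1 (by exact_mod_cast hΦ)
    refine ⟨hb, _, fun i t ht => ?_, (ih hderiv hF₀ ?_).mul hF''⟩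
    · have hmem := hSU (hFS i t ht)
      exact ((hdiff _ hmem).differentiableAt (hU.mem_nhds hmem)).hasDerivAt.comp t (hF' i t ht)
    · obtain ⟨M, hM⟩ := hS.exists_bound_of_continuousOn (hderiv.continuousOn.mono hSU)
      exact ⟨M, fun i t ht => hM _ (hFS i t ht)⟩

lemma id (hΩb : Bornology.IsBounded Ω) : UnifContDiffOn n (fun (_ : ι) t => t) Ω := by
  obtain ⟨R, hR⟩ := isBounded_iff_forall_norm_le.1 hΩb
  cases n with
  | zero => exact ⟨⟨R, fun _ => hR⟩, fun _ => continuousOn_id⟩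
  | succ n => exact ⟨⟨R, fun _ => hR⟩, fun _ _ => 1, fun _ t _ => hasDerivAt_id t,
      const ⟨1, fun _ => abs_one.le⟩⟩

lemma of_contDiff {f : ℝ → ℝ} (hΩb : Bornology.IsBounded Ω) (hf : ContDiff ℝ n f) :
    UnifContDiffOn n (fun _ : ι => f) Ω := by
  obtain ⟨R, hR⟩ := isBounded_iff_forall_norm_le.1 hΩb
  exact (id hΩb).comp isOpen_univ (isCompact_Icc (a := -R) (b := R)) (subset_univ _)
    hf.contDiffOn fun _ t ht => abs_le.1 (hR t ht)

end UnifContDiffOn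

lemma eventually_eq_zero_of_forall_notMem (hΩ : IsOpen Ω) {K : Set ℝ} (hK : IsClosed K)
    {f : ℝ → ℝ} (h0 : ∀ t ∈ Ω, t ∉ K → f t = 0) {t : ℝ} (ht : t ∈ Ω) (htK : t ∉ K) :
    f =ᶠ[𝓝 t] fun _ => 0 := by
  filter_upwards [hΩ.mem_nhds ht, hK.isOpen_compl.mem_nhds htK] with x hx hxK
  exact h0 x hx hxK

lemma deriv_eq_zero_of_forall_notMem (hΩ : IsOpen Ω) {K : Set ℝ} (hK : IsClosed K)
    {f f' : ℝ → ℝ} (hf : ∀ t ∈ Ω, HasDerivAt f (f' t) t) (h0 : ∀ t ∈ Ω, t ∉ K → f t = 0) :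
    ∀ t ∈ Ω, t ∉ K → f' t = 0 := fun t ht htK =>
  (hf t ht).unique ((hasDerivAt_const t (0 : ℝ)).congr_of_eventuallyEq
    (eventually_eq_zero_of_forall_notMem hΩ hK h0 ht htK))

section Div

variable {K : Set ℝ} {c : ℝ}

lemma UnifBddOn.div (hF : UnifBddOn F Ω) (hc : 0 < c)
    (hF0 : ∀ i, ∀ t ∈ Ω, t ∉ K → F i t = 0) (hG : ∀ i, ∀ t ∈ Ω, t ∈ K → c ≤ |G i t|) :
    UnifBddOn (fun i t => F i t / G i t) Ω := by
  obtain ⟨M, hM0, hM⟩ := hF.exists_nonneg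
  refine ⟨M / c, fun i t ht => ?_⟩
  by_cases htK : t ∈ K
  · rw [abs_div]
    exact div_le_div₀ hM0 (hM i t ht) hc (hG i t ht htK)
  · simp only [hF0 i t ht htK, zero_div, abs_zero]
    positivity

lemma continuousOn_div_of_eq_zero {f g : ℝ → ℝ} (hΩ : IsOpen Ω) (hK : IsClosed K)
    (hf : ContinuousOn f Ω) (hg : ContinuousOn g Ω) (hf0 : ∀ t ∈ Ω, t ∉ K → f t = 0)
    (hg0 : ∀ t ∈ Ω, t ∈ K → g t ≠ 0) : ContinuousOn (fun t => f t / g t) Ω := by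
  intro t ht
  by_cases htK : t ∈ K
  · exact (hf t ht).div (hg t ht) (hg0 t ht htK)
  · exact (continuousAt_const.congr (eventually_eq_zero_of_forall_notMem hΩ hK
      (fun s hs hsK => by rw [hf0 s hs hsK, zero_div]) ht htK).symm).continuousWithinAt

lemma hasDerivAt_div_of_eq_zero {f f' g g' : ℝ → ℝ} (hΩ : IsOpen Ω) (hK : IsClosed K)
    (hf : ∀ t ∈ Ω, HasDerivAt f (f' t) t) (hg : ∀ t ∈ Ω, HasDerivAt g (g' t) t)
    (hf0 : ∀ t ∈ Ω, t ∉ K → f t = 0) (hg0 : ∀ t ∈ Ω, t ∈ K → g t ≠ 0) {t : ℝ} (ht : t ∈ Ω) :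
    HasDerivAt (fun t => f t / g t) ((f' t - f t / g t * g' t) / g t) t := by
  by_cases htK : t ∈ K
  · have hne := hg0 t ht htK
    exact ((hf t ht).fun_div (hg t ht) hne).congr_deriv (by field_simp)
  · rw [deriv_eq_zero_of_forall_notMem hΩ hK hf hf0 t ht htK, hf0 t ht htK, zero_div, zero_mul,
      sub_zero, zero_div]
    exact (hasDerivAt_const t (0 : ℝ)).congr_of_eventuallyEq
      (eventually_eq_zero_of_forall_notMem hΩ hK
        (fun s hs hsK => by rw [hf0 s hs hsK, zero_div]) ht htK)

lemma UnifContDiffOn.div_of_eq_zero (hΩ : IsOpen Ω) (hK : IsClosed K) (hc : 0 < c)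
    (hF : UnifContDiffOn n F Ω) (hG : UnifContDiffOn n G Ω)
    (hF0 : ∀ i, ∀ t ∈ Ω, t ∉ K → F i t = 0) (hGc : ∀ i, ∀ t ∈ Ω, t ∈ K → c ≤ |G i t|) :
    UnifContDiffOn n (fun i t => F i t / G i t) Ω := by
  have hG0 : ∀ i, ∀ t ∈ Ω, t ∈ K → G i t ≠ 0 := fun i t ht htK =>
    abs_pos.1 (hc.trans_le (hGc i t ht htK))
  induction n generalizing F with
  | zero =>
    exact ⟨hF.1.div hc hF0 hGc, fun i =>
      continuousOn_div_of_eq_zero hΩ hK (hF.2 i) (hG.2 i) (hF0 i) (hG0 i)⟩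
  | succ n ih =>
    have hquot := ih hF.of_succ hG.of_succ hF0
    have hG₀ := hG.of_succ
    obtain ⟨hFb, F', hF', hF''⟩ := hF
    obtain ⟨-, G', hG', hG''⟩ := hG
    refine ⟨hFb.div hc hF0 hGc, _, fun i t ht =>
      hasDerivAt_div_of_eq_zero hΩ hK (hF' i) (hG' i) (hF0 i) (hG0 i) ht,
      ih (hF''.sub (hquot.mul hG'')) hG₀ fun i t ht htK => ?_⟩
    rw [deriv_eq_zero_of_forall_notMem hΩ hK (hF' i) (hF0 i) t ht htK, hF0 i t ht htK, zero_div,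
      zero_mul, sub_zero]

lemma UnifContDiffOn.div (hΩ : IsOpen Ω) (hc : 0 < c) (hF : UnifContDiffOn n F Ω)
    (hG : UnifContDiffOn n G Ω) (hGc : ∀ i, ∀ t ∈ Ω, c ≤ |G i t|) :
    UnifContDiffOn n (fun i t => F i t / G i t) Ω :=
  hF.div_of_eq_zero hΩ isClosed_univ hc hG (fun _ t _ h => (h (mem_univ t)).elim)
    fun i t ht _ => hGc i t ht

end Div

/-- The average of `f` over the segment from `T` to `t`, with weight `w`. Weighted averages of
derivatives are the remainders of Taylor's formula at `T`, divided by powers of `t - T`. -/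
def segAvg (w f : ℝ → ℝ) (T t : ℝ) : ℝ := ∫ θ in (0 : ℝ)..1, w θ * f (T + θ * (t - T))

section SegmentAverages

variable {w f f' : ℝ → ℝ} {T t K M : ℝ}

lemma segAvg_self (w f : ℝ → ℝ) (T : ℝ) : segAvg w f T T = (∫ θ in (0 : ℝ)..1, w θ) * f T := by
  simp [segAvg]

variable (hΩc : Convex ℝ Ω)
include hΩc

lemma add_mul_sub_mem {θ : ℝ} (hT : T ∈ Ω) (ht : t ∈ Ω) (hθ : θ ∈ uIcc (0 : ℝ) 1) :
    T + θ * (t - T) ∈ Ω := by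
  rw [uIcc_of_le zero_le_one] at hθ
  exact hΩc.add_smul_sub_mem hT ht hθ

lemma intervalIntegrable_segAvg (hw : Continuous w) (hf : ContinuousOn f Ω) (hT : T ∈ Ω)
    (ht : t ∈ Ω) : IntervalIntegrable (fun θ => w θ * f (T + θ * (t - T))) volume 0 1 :=
  (hw.continuousOn.mul (hf.comp (by fun_prop)
    fun _ hθ => add_mul_sub_mem hΩc hT ht hθ)).intervalIntegrable

lemma norm_segAvg_integrand_le (hK : ∀ θ ∈ uIcc (0 : ℝ) 1, |w θ| ≤ K)
    (hM : ∀ t ∈ Ω, |f t| ≤ M) (hT : T ∈ Ω) (ht : t ∈ Ω) {θ : ℝ} (hθ : θ ∈ uIoc (0 : ℝ) 1) :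
    ‖w θ * f (T + θ * (t - T))‖ ≤ K * M := by
  have hθ' := uIoc_subset_uIcc hθ
  rw [norm_mul]
  exact mul_le_mul (hK θ hθ') (hM _ (add_mul_sub_mem hΩc hT ht hθ')) (abs_nonneg _)
    ((abs_nonneg _).trans (hK θ hθ'))

lemma abs_segAvg_le (hK : ∀ θ ∈ uIcc (0 : ℝ) 1, |w θ| ≤ K) (hM : ∀ t ∈ Ω, |f t| ≤ M)
    (hT : T ∈ Ω) (ht : t ∈ Ω) : |segAvg w f T t| ≤ K * M := by
  simpa [segAvg] using intervalIntegral.norm_integral_le_of_norm_le_const fun θ hθ =>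
    norm_segAvg_integrand_le hΩc hK hM hT ht hθ

lemma le_segAvg (hw : Continuous w) (hw0 : ∀ θ ∈ Icc (0 : ℝ) 1, 0 ≤ w θ)
    (hw1 : ∫ θ in (0 : ℝ)..1, w θ = 1) (hf : ContinuousOn f Ω) {c : ℝ} (hc : ∀ t ∈ Ω, c ≤ f t)
    (hT : T ∈ Ω) (ht : t ∈ Ω) : c ≤ segAvg w f T t := by
  rw [← one_mul c, ← hw1, ← intervalIntegral.integral_mul_const]
  refine intervalIntegral.integral_mono_on zero_le_one
    (Continuous.intervalIntegrable (by fun_prop) 0 1)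
    (intervalIntegrable_segAvg hΩc hw hf hT ht) fun θ hθ => ?_
  exact mul_le_mul_of_nonneg_left
    (hc _ (add_mul_sub_mem hΩc hT ht (Icc_subset_uIcc hθ))) (hw0 θ hθ)

lemma sub_eq_mul_segAvg (hf : ∀ t ∈ Ω, HasDerivAt f (f' t) t) (hf' : ContinuousOn f' Ω)
    (hT : T ∈ Ω) (ht : t ∈ Ω) : f t - f T = (t - T) * segAvg (fun _ => 1) f' T t := by
  have hd : ∀ θ ∈ uIcc (0 : ℝ) 1,
      HasDerivAt (fun θ => f (T + θ * (t - T))) ((t - T) * (1 * f' (T + θ * (t - T)))) θ := by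
    intro θ hθ
    have h1 : HasDerivAt (fun θ => T + θ * (t - T)) (t - T) θ := by
      simpa using ((hasDerivAt_id θ).mul_const (t - T)).const_add T
    exact ((hf _ (add_mul_sub_mem hΩc hT ht hθ)).comp θ h1).congr_deriv (by ring)
  have hInt := intervalIntegral.integral_eq_sub_of_hasDerivAt hd
    ((intervalIntegrable_segAvg hΩc continuous_const hf' hT ht).const_mul _)
  rw [intervalIntegral.integral_const_mul] at hInt
  rw [segAvg, hInt]
  simp

lemma mul_sq_le_mul_sub (hf : ∀ t ∈ Ω, HasDerivAt f (f' t) t) (hf' : ContinuousOn f' Ω) {c : ℝ}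
    (hc : ∀ t ∈ Ω, c ≤ f' t) (hT : T ∈ Ω) (ht : t ∈ Ω) :
    c * (t - T) ^ 2 ≤ (t - T) * (f t - f T) := by
  have h := le_segAvg hΩc (w := fun _ => 1) continuous_const (by simp) (by simp) hf' hc hT ht
  rw [sub_eq_mul_segAvg hΩc hf hf' hT ht]
  nlinarith [mul_le_mul_of_nonneg_right h (sq_nonneg (t - T))]

lemma mul_sub_le_mul_sq (hf : ∀ t ∈ Ω, HasDerivAt f (f' t) t) (hf' : ContinuousOn f' Ω) {L : ℝ}
    (hL : ∀ t ∈ Ω, f' t ≤ L) (hT : T ∈ Ω) (ht : t ∈ Ω) :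
    (t - T) * (f t - f T) ≤ L * (t - T) ^ 2 := by
  have h := mul_sq_le_mul_sub hΩc (fun t ht => (hf t ht).neg) hf'.neg
    (fun t ht => neg_le_neg (hL t ht)) hT ht
  simp only [Pi.neg_apply] at h
  linarith

variable (hΩ : IsOpen Ω)
include hΩ

lemma continuousOn_segAvg (hw : Continuous w) (hf : ContinuousOn f Ω)
    (hM : ∀ t ∈ Ω, |f t| ≤ M) (hT : T ∈ Ω) : ContinuousOn (segAvg w f T) Ω := by
  intro t ht
  obtain ⟨K, hK⟩ := isCompact_uIcc.exists_bound_of_continuousOn (s := uIcc (0 : ℝ) 1)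
    hw.continuousOn
  refine (intervalIntegral.continuousAt_of_dominated_interval (bound := fun _ => K * M)
    ?_ ?_ intervalIntegrable_const ?_).continuousWithinAt
  · filter_upwards [hΩ.mem_nhds ht] with x hx
    exact (intervalIntegrable_segAvg hΩc hw hf hT hx).def'.aestronglyMeasurable
  · filter_upwards [hΩ.mem_nhds ht] with x hx
    exact Eventually.of_forall fun θ => norm_segAvg_integrand_le hΩc hK hM hT hx
  · refine Eventually.of_forall fun θ hθ => ?_
    have hmem := add_mul_sub_mem hΩc hT ht (uIoc_subset_uIcc hθ)
    exact continuousAt_const.mul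
      ((hf.continuousAt (hΩ.mem_nhds hmem)).comp (f := fun x => T + θ * (x - T)) (by fun_prop))

lemma hasDerivAt_segAvg (hw : Continuous w) (hf : ∀ t ∈ Ω, HasDerivAt f (f' t) t)
    (hf' : ContinuousOn f' Ω) (hM : ∀ t ∈ Ω, |f' t| ≤ M) (hT : T ∈ Ω) (ht : t ∈ Ω) :
    HasDerivAt (segAvg w f T) (segAvg (fun θ => w θ * θ) f' T t) t := by
  have hfc : ContinuousOn f Ω := HasDerivAt.continuousOn hf
  have hw' : Continuous fun θ => w θ * θ := hw.mul continuous_id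
  obtain ⟨K, hK⟩ := isCompact_uIcc.exists_bound_of_continuousOn (s := uIcc (0 : ℝ) 1)
    hw'.continuousOn
  refine (intervalIntegral.hasDerivAt_integral_of_dominated_loc_of_deriv_le (μ := volume)
    (F := fun x θ => w θ * f (T + θ * (x - T)))
    (F' := fun x θ => w θ * θ * f' (T + θ * (x - T))) (bound := fun _ => K * M)
    (hΩ.mem_nhds ht) ?_ (intervalIntegrable_segAvg hΩc hw hfc hT ht)
    (intervalIntegrable_segAvg hΩc hw' hf' hT ht).def'.aestronglyMeasurable ?_
    intervalIntegrable_const ?_).2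
  · filter_upwards [hΩ.mem_nhds ht] with x hx
    exact (intervalIntegrable_segAvg hΩc hw hfc hT hx).def'.aestronglyMeasurable
  · exact Eventually.of_forall fun θ hθ x hx =>
      norm_segAvg_integrand_le hΩc hK hM hT hx hθ
  · refine Eventually.of_forall fun θ hθ x hx => ?_
    have h1 : HasDerivAt (fun x => T + θ * (x - T)) θ x := by
      simpa using (((hasDerivAt_id x).sub_const T).const_mul θ).const_add T
    have hmem := add_mul_sub_mem hΩc hT hx (uIoc_subset_uIcc hθ)
    exact (((hf _ hmem).comp x h1).const_mul (w θ)).congr_deriv (by ring)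

omit hΩ in
lemma UnifBddOn.segAvg {T : ι → ℝ} (hT : ∀ i, T i ∈ Ω) (hF : UnifBddOn F Ω)
    (hw : Continuous w) : UnifBddOn (fun i => segAvg w (F i) (T i)) Ω := by
  obtain ⟨M, hM⟩ := hF
  obtain ⟨K, hK⟩ := isCompact_uIcc.exists_bound_of_continuousOn (s := uIcc (0 : ℝ) 1)
    hw.continuousOn
  exact ⟨K * M, fun i t ht => abs_segAvg_le hΩc hK (hM i) (hT i) ht⟩

lemma UnifContDiffOn.segAvg {T : ι → ℝ} (hT : ∀ i, T i ∈ Ω) (hF : UnifContDiffOn n F Ω)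
    (hw : Continuous w) : UnifContDiffOn n (fun i => segAvg w (F i) (T i)) Ω := by
  have hb := hF.unifBddOn.segAvg hΩc hT hw
  induction n generalizing F w with
  | zero =>
    obtain ⟨M, hM⟩ := hF.1
    exact ⟨hb, fun i => continuousOn_segAvg hΩc hΩ hw (hF.2 i) (hM i) (hT i)⟩
  | succ n ih =>
    obtain ⟨-, F', hF', hF''⟩ := hF
    obtain ⟨M, hM⟩ := hF''.unifBddOn
    have hw' : Continuous fun θ => w θ * θ := hw.mul continuous_id
    exact ⟨hb, _, fun i t ht => hasDerivAt_segAvg hΩc hΩ hw (hF' i) (hF''.continuousOn i)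
      (hM i) (hT i) ht, ih hF'' hw' (hF''.unifBddOn.segAvg hΩc hT hw')⟩

end SegmentAverages

end UniformFamilies

lemma mul_sub_le_sub_of_le_deriv {Ω : Set ℝ} {y w : ℝ → ℝ} {c s t : ℝ}
    (hΩc : Convex ℝ Ω) (hy : ∀ t ∈ Ω, HasDerivAt y (w t) t) (hw : ∀ t ∈ Ω, c ≤ w t) (hs : s ∈ Ω)
    (ht : t ∈ Ω) (hst : s ≤ t) : c * (t - s) ≤ y t - y s :=
  hΩc.mul_sub_le_image_sub_of_le_deriv (HasDerivAt.continuousOn hy)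
    (fun x hx => (hy x (interior_subset hx)).differentiableAt.differentiableWithinAt)
    (fun x hx => by rw [(hy x (interior_subset hx)).deriv]; exact hw x (interior_subset hx))
    s hs t ht hst

/-- The oscillating factor `e^{iλx}`. -/
def osc (lam x : ℝ) : ℂ := Complex.exp (Complex.I * lam * x)

section OscillatingFactor

variable {lam α β : ℝ} {ψ p : ℝ → ℝ}

lemma norm_osc (lam x : ℝ) : ‖osc lam x‖ = 1 := by
  rw [osc, Complex.norm_exp]
  simp

lemma osc_add (lam x y : ℝ) : osc lam (x + y) = osc lam x * osc lam y := by
  simp only [osc, ← Complex.exp_add, Complex.ofReal_add, mul_add]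

lemma osc_neg (lam x : ℝ) : osc lam (-x) = starRingEnd ℂ (osc lam x) := by
  simp [osc, ← Complex.exp_conj]

lemma hasDerivAt_osc_comp {p₀ t : ℝ} (hψ : HasDerivAt ψ p₀ t) :
    HasDerivAt (fun t => osc lam (ψ t)) (Complex.I * lam * p₀ * osc lam (ψ t)) t := by
  have h := (hψ.ofReal_comp.const_mul (Complex.I * (lam : ℂ))).cexp
  exact h.congr_deriv (by rw [osc]; ring)

lemma continuousOn_osc_comp {s : Set ℝ} (hψ : ∀ t ∈ s, HasDerivAt ψ (p t) t) :
    ContinuousOn (fun t => osc lam (ψ t)) s :=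
  HasDerivAt.continuousOn fun t ht => hasDerivAt_osc_comp (hψ t ht)

lemma intervalIntegrable_mul_osc {g : ℝ → ℂ} (hg : ContinuousOn g (uIcc α β))
    (hψ : ∀ t ∈ uIcc α β, HasDerivAt ψ (p t) t) :
    IntervalIntegrable (fun t => g t * osc lam (ψ t)) volume α β :=
  (hg.mul (continuousOn_osc_comp hψ)).intervalIntegrable

lemma integral_mul_deriv_mul_osc {h h' : ℝ → ℝ}
    (hh : ∀ t ∈ uIcc α β, HasDerivAt h (h' t) t) (hh' : ContinuousOn h' (uIcc α β))
    (hψ : ∀ t ∈ uIcc α β, HasDerivAt ψ (p t) t) (hp : ContinuousOn p (uIcc α β)) :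
    Complex.I * lam * ∫ t in α..β, (h t * p t : ℝ) * osc lam (ψ t) =
      h β * osc lam (ψ β) - h α * osc lam (ψ α) - ∫ t in α..β, h' t * osc lam (ψ t) := by
  have hosc := continuousOn_osc_comp (lam := lam) hψ
  have hIBP := intervalIntegral.integral_mul_deriv_eq_deriv_mul
    (fun t ht => (hh t ht).ofReal_comp) (fun t ht => hasDerivAt_osc_comp (lam := lam) (hψ t ht))
    (Complex.continuous_ofReal.comp_continuousOn hh').intervalIntegrable
    (((Complex.continuous_ofReal.comp_continuousOn hp).const_mul _).mul hosc).intervalIntegrable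
  rw [← intervalIntegral.integral_const_mul, ← hIBP]
  refine intervalIntegral.integral_congr fun t _ => ?_
  push_cast
  ring

lemma integral_mul_osc_of_hasDerivAt_div {f g : ℝ → ℝ} (hf : ∀ t ∈ uIcc α β, p t = 0 → f t = 0)
    (hg : ∀ t ∈ uIcc α β, HasDerivAt (fun t => f t / p t) (g t) t)
    (hg' : ContinuousOn g (uIcc α β)) (hψ : ∀ t ∈ uIcc α β, HasDerivAt ψ (p t) t)
    (hp : ContinuousOn p (uIcc α β)) :
    Complex.I * lam * ∫ t in α..β, f t * osc lam (ψ t) =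
      (f β / p β : ℝ) * osc lam (ψ β) - (f α / p α : ℝ) * osc lam (ψ α) -
        ∫ t in α..β, g t * osc lam (ψ t) := by
  rw [← integral_mul_deriv_mul_osc hg hg' hψ hp]
  congr 1
  refine intervalIntegral.integral_congr fun t ht => ?_
  simp only [div_mul_cancel_of_imp (hf t ht)]

end OscillatingFactor

section NonstationaryPhase

variable {ι : Type*} {Ω K : Set ℝ} {α β : ℝ} {ψ p F : ι → ℝ → ℝ}

theorem nonstationary_phase (hΩ : IsOpen Ω) (hK : IsClosed K) (hαβ : uIcc α β ⊆ Ω)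
    (hαK : α ∉ K) (hβK : β ∉ K) (hψ : ∀ i, ∀ t ∈ Ω, HasDerivAt (ψ i) (p i t) t) {c : ℝ}
    (hc : 0 < c) (hlow : ∀ i, ∀ t ∈ Ω, t ∈ K → c ≤ |p i t|) {n : ℕ} (hp : UnifContDiffOn n p Ω)
    (hF : UnifContDiffOn n F Ω) (hF0 : ∀ i, ∀ t ∈ Ω, t ∉ K → F i t = 0) :
    ∃ B : ℝ, 0 ≤ B ∧ ∀ i, ∀ lam : ℝ, 0 < lam →
      ‖∫ t in α..β, F i t * osc lam (ψ i t)‖ ≤ B / lam ^ n := by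
  induction n generalizing F with
  | zero =>
    obtain ⟨M, hM0, hM⟩ := hF.1.exists_nonneg
    refine ⟨M * |β - α|, by positivity, fun i lam _ => ?_⟩
    rw [pow_zero, div_one]
    refine intervalIntegral.norm_integral_le_of_norm_le_const fun t ht => ?_
    rw [norm_mul, norm_osc, mul_one, Complex.norm_real]
    exact hM i t (hαβ (uIoc_subset_uIcc ht))
  | succ n ih =>
    obtain ⟨-, G', hG', hG''⟩ := hF.div_of_eq_zero hΩ hK hc hp hF0 hlow
    have hG0 : ∀ i, ∀ t ∈ Ω, t ∉ K → F i t / p i t = 0 := fun i t ht htK => by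
      rw [hF0 i t ht htK, zero_div]
    obtain ⟨B, hB0, hB⟩ := ih hp.of_succ hG''
      fun i => deriv_eq_zero_of_forall_notMem hΩ hK (hG' i) (hG0 i)
    refine ⟨B, hB0, fun i lam hlam => ?_⟩
    have hIBP : Complex.I * lam * ∫ t in α..β, F i t * osc lam (ψ i t) =
        -∫ t in α..β, G' i t * osc lam (ψ i t) := by
      rw [integral_mul_osc_of_hasDerivAt_div (fun t ht hp0 => hF0 i t (hαβ ht) fun htK =>
        (hc.trans_le (hlow i t (hαβ ht) htK)).ne' (abs_eq_zero.2 hp0))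
        (fun t ht => hG' i t (hαβ ht)) ((hG''.continuousOn i).mono hαβ)
        (fun t ht => hψ i t (hαβ ht)) ((hp.continuousOn i).mono hαβ),
        hG0 i α (hαβ left_mem_uIcc) hαK, hG0 i β (hαβ right_mem_uIcc) hβK]
      simp
    have hnorm : lam * ‖∫ t in α..β, F i t * osc lam (ψ i t)‖ ≤ B / lam ^ n := by
      simpa [abs_of_pos hlam] using
        (congrArg norm hIBP).trans_le ((norm_neg _).trans_le (hB i lam hlam))
    rwa [pow_succ, ← div_div, le_div_iff₀' hlam]

end NonstationaryPhase

/-- The denominator `1 + iλup` in van der Corput's method: near a critical point `T` of `ψ`, with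
`u = t - T` and `p = ψ'(t)`, it satisfies `(u e^{iλψ})' = (1 + iλup) e^{iλψ}` and never
vanishes. -/
def vdcDenom (lam u p : ℝ) : ℂ := 1 + Complex.I * lam * (u * p)

section VanDerCorput

variable {lam u p q a a' c L M M' R : ℝ}

lemma vdcDenom_re (lam u p : ℝ) : (vdcDenom lam u p).re = 1 := by simp [vdcDenom]

lemma vdcDenom_im (lam u p : ℝ) : (vdcDenom lam u p).im = lam * (u * p) := by simp [vdcDenom]

lemma one_le_norm_vdcDenom (lam u p : ℝ) : 1 ≤ ‖vdcDenom lam u p‖ := by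
  simpa [vdcDenom_re] using Complex.abs_re_le_norm (vdcDenom lam u p)

lemma norm_vdcDenom_pos (lam u p : ℝ) : 0 < ‖vdcDenom lam u p‖ :=
  zero_lt_one.trans_le (one_le_norm_vdcDenom lam u p)

lemma mul_sq_le_norm_vdcDenom (hlam : 0 ≤ lam) (hcp : c * u ^ 2 ≤ u * p) :
    lam * (c * u ^ 2) ≤ ‖vdcDenom lam u p‖ :=
  calc lam * (c * u ^ 2) ≤ lam * (u * p) := mul_le_mul_of_nonneg_left hcp hlam
    _ = (vdcDenom lam u p).im := (vdcDenom_im lam u p).symm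
    _ ≤ ‖vdcDenom lam u p‖ := (le_abs_self _).trans (Complex.abs_im_le_norm _)

lemma norm_div_vdcDenom_le (hlam : 0 < lam) (hc : 0 < c) (hcp : c * u ^ 2 ≤ u * p) :
    ‖(u : ℂ) / vdcDenom lam u p‖ ≤ 1 / √(c * lam) := by
  have hW := one_le_norm_vdcDenom lam u p
  have hsq : c * lam * u ^ 2 ≤ ‖vdcDenom lam u p‖ ^ 2 := by
    nlinarith [mul_sq_le_norm_vdcDenom hlam.le hcp]
  rw [norm_div, Complex.norm_real, norm_eq_abs, div_le_div_iff₀ (norm_vdcDenom_pos lam u p)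
    (by positivity), one_mul, ← Real.sqrt_sq_eq_abs, ← Real.sqrt_mul (sq_nonneg u)]
  exact Real.sqrt_le_iff.2 ⟨norm_nonneg _, by linarith⟩

/-- The amplitude left after one step of van der Corput's method: the derivative of
`a u / (1 + iλup)` without its term `a / (1 + iλup)`, where `a'` and `q` are the values of the
derivatives of `a` and `p`. -/
def vdcRemainder (lam u a a' p q : ℝ) : ℂ :=
  a' * (u / vdcDenom lam u p) -
    a * (Complex.I * lam * (u * (p + u * q) : ℝ) / vdcDenom lam u p ^ 2)

lemma norm_deriv_vdcDenom_div_sq_le (hlam : 0 < lam) (hc : 0 < c) (hcp : c * u ^ 2 ≤ u * p)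
    (hpL : u * p ≤ L * u ^ 2) (hq : |q| ≤ L) :
    ‖Complex.I * lam * (u * (p + u * q) : ℝ) / vdcDenom lam u p ^ 2‖ ≤
      2 * L / c / ‖vdcDenom lam u p‖ := by
  set W := ‖vdcDenom lam u p‖ with hW
  have hW0 : 0 < W := norm_vdcDenom_pos lam u p
  have hL : 0 ≤ L := (abs_nonneg q).trans hq
  have hnum : |u * (p + u * q)| ≤ 2 * L * u ^ 2 := by
    have huq : |u ^ 2 * q| ≤ L * u ^ 2 := by
      rw [abs_mul, abs_of_nonneg (sq_nonneg u), mul_comm]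
      gcongr
    rw [abs_le] at huq ⊢
    constructor <;> nlinarith [mul_nonneg hc.le (sq_nonneg u)]
  rw [norm_div, norm_pow, norm_mul, norm_mul, Complex.norm_I, one_mul, Complex.norm_real,
    Complex.norm_real, norm_of_nonneg hlam.le, norm_eq_abs, ← hW, div_div,
    div_le_div_iff₀ (by positivity) (by positivity)]
  calc lam * |u * (p + u * q)| * (c * W) ≤ lam * (2 * L * u ^ 2) * (c * W) := by gcongr
    _ = 2 * L * (lam * (c * u ^ 2)) * W := by ring
    _ ≤ 2 * L * W * W := by gcongr; exact mul_sq_le_norm_vdcDenom hlam.le hcp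
    _ = 2 * L * W ^ 2 := by ring

lemma norm_vdcRemainder_le (hlam : 0 < lam) (hc : 0 < c) (hcp : c * u ^ 2 ≤ u * p)
    (hpL : u * p ≤ L * u ^ 2) (hq : |q| ≤ L) (hu : |u| ≤ R) (ha : |a| ≤ M) (ha' : |a'| ≤ M') :
    ‖vdcRemainder lam u a a' p q‖ ≤ 2 * (M' * R + 2 * M * L / c) * (1 + c * lam * u ^ 2)⁻¹ := by
  have hL : 0 ≤ L := (abs_nonneg q).trans hq
  have hM : 0 ≤ M := (abs_nonneg a).trans ha
  have hM' : 0 ≤ M' := (abs_nonneg a').trans ha'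
  have hR : 0 ≤ R := (abs_nonneg u).trans hu
  have hinv : 1 / ‖vdcDenom lam u p‖ ≤ 2 * (1 + c * lam * u ^ 2)⁻¹ := by
    rw [← div_eq_mul_inv, div_le_div_iff₀ (norm_vdcDenom_pos lam u p) (by positivity)]
    linarith [one_le_norm_vdcDenom lam u p, mul_sq_le_norm_vdcDenom hlam.le hcp]
  calc ‖vdcRemainder lam u a a' p q‖
    _ ≤ |a'| * (|u| / ‖vdcDenom lam u p‖) + |a| * (2 * L / c / ‖vdcDenom lam u p‖) := by
      refine (norm_sub_le _ _).trans ?_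
      rw [norm_mul, norm_mul, norm_div, Complex.norm_real, Complex.norm_real, Complex.norm_real]
      exact add_le_add le_rfl (mul_le_mul_of_nonneg_left
        (norm_deriv_vdcDenom_div_sq_le hlam hc hcp hpL hq) (abs_nonneg a))
    _ ≤ M' * (R / ‖vdcDenom lam u p‖) + M * (2 * L / c / ‖vdcDenom lam u p‖) := by gcongr
    _ = (M' * R + 2 * M * L / c) * (1 / ‖vdcDenom lam u p‖) := by ring
    _ ≤ (M' * R + 2 * M * L / c) * (2 * (1 + c * lam * u ^ 2)⁻¹) := by gcongr
    _ = _ := by ring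

lemma integrable_inv_one_add_mul_sq {b : ℝ} (hb : 0 < b) (T : ℝ) :
    Integrable fun t : ℝ => (1 + b * (t - T) ^ 2)⁻¹ := by
  have h := (integrable_inv_one_add_sq.comp_mul_left' (Real.sqrt_pos.2 hb).ne').comp_sub_right T
  simpa only [mul_pow, Real.sq_sqrt hb.le] using h

lemma integral_inv_one_add_mul_sq {b : ℝ} (hb : 0 < b) (T : ℝ) :
    ∫ t : ℝ, (1 + b * (t - T) ^ 2)⁻¹ = π / √b := by
  rw [integral_sub_right_eq_self (fun s : ℝ => (1 + b * s ^ 2)⁻¹) T]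
  have h := Measure.integral_comp_mul_left (fun x : ℝ => (1 + x ^ 2)⁻¹) √b
  simp only [mul_pow, Real.sq_sqrt hb.le] at h
  rw [h, integral_univ_inv_one_add_sq, abs_of_nonneg (by positivity), smul_eq_mul, inv_mul_eq_div]

lemma norm_integral_le_of_norm_le_inv_one_add_mul_sq {g : ℝ → ℂ} {α β T b C : ℝ} (hαβ : α ≤ β)
    (hb : 0 < b) (hC : 0 ≤ C) (hg : ∀ t ∈ Icc α β, ‖g t‖ ≤ C * (1 + b * (t - T) ^ 2)⁻¹) :
    ‖∫ t in α..β, g t‖ ≤ C * (π / √b) := by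
  have hi := (integrable_inv_one_add_mul_sq hb T).const_mul C
  calc ‖∫ t in α..β, g t‖ ≤ ∫ t in α..β, C * (1 + b * (t - T) ^ 2)⁻¹ :=
        intervalIntegral.norm_integral_le_of_norm_le hαβ
          (Eventually.of_forall fun t ht => hg t (Ioc_subset_Icc_self ht))
          hi.intervalIntegrable
    _ ≤ ∫ t, C * (1 + b * (t - T) ^ 2)⁻¹ := by
      rw [intervalIntegral.integral_of_le hαβ]
      exact setIntegral_le_integral hi (Eventually.of_forall fun t => by positivity)
    _ = C * (π / √b) := by rw [integral_const_mul, integral_inv_one_add_mul_sq hb]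

section

variable {T α β : ℝ} {f f' ψ p q : ℝ → ℝ}

lemma hasDerivAt_mul_div_vdcDenom {t : ℝ} (hf : HasDerivAt f (f' t) t)
    (hψ : HasDerivAt ψ (p t) t) (hp : HasDerivAt p (q t) t) :
    HasDerivAt (fun t => f t * ((t - T : ℝ) / vdcDenom lam (t - T) (p t)) * osc lam (ψ t))
      (f t * osc lam (ψ t) +
        vdcRemainder lam (t - T) (f t) (f' t) (p t) (q t) * osc lam (ψ t)) t := by
  have hne : vdcDenom lam (t - T) (p t) ≠ 0 := norm_pos_iff.1 (norm_vdcDenom_pos _ _ _)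
  have hu : HasDerivAt (fun t : ℝ => t - T) 1 t := (hasDerivAt_id t).sub_const T
  have hW : HasDerivAt (fun t => vdcDenom lam (t - T) (p t))
      (Complex.I * lam * (p t + (t - T : ℝ) * q t)) t := by
    have h := ((hu.ofReal_comp.fun_mul hp.ofReal_comp).const_mul
      (Complex.I * (lam : ℂ))).const_add 1
    simpa only [vdcDenom, Complex.ofReal_one, one_mul] using h
  refine ((hf.ofReal_comp.fun_mul (hu.ofReal_comp.fun_div hW hne)).fun_mul
    (hasDerivAt_osc_comp hψ)).congr_deriv ?_
  rw [vdcRemainder]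
  field_simp
  rw [vdcDenom]
  push_cast
  ring

lemma continuousOn_vdcRemainder {s : Set ℝ} (hf : ContinuousOn f s) (hf' : ContinuousOn f' s)
    (hp : ContinuousOn p s) (hq : ContinuousOn q s) :
    ContinuousOn (fun t => vdcRemainder lam (t - T) (f t) (f' t) (p t) (q t)) s := by
  have hne : ∀ t, vdcDenom lam (t - T) (p t) ≠ 0 := fun t =>
    norm_pos_iff.1 (norm_vdcDenom_pos _ _ _)
  have hW : ContinuousOn (fun t => vdcDenom lam (t - T) (p t)) s := by
    unfold vdcDenom
    fun_prop
  unfold vdcRemainder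
  fun_prop (disch := simp [hne])

variable (hαβ : α ≤ β) (hT : T ∈ Icc α β) (hpT : p T = 0)
  (hψ : ∀ t ∈ Icc α β, HasDerivAt ψ (p t) t) (hp : ∀ t ∈ Icc α β, HasDerivAt p (q t) t)
  (hq : ContinuousOn q (Icc α β)) (hf : ∀ t ∈ Icc α β, HasDerivAt f (f' t) t)
  (hf' : ContinuousOn f' (Icc α β))
include hαβ hψ hp hq hf hf'

lemma integral_mul_osc_add_integral_vdcRemainder :
    (∫ t in α..β, f t * osc lam (ψ t)) +
        ∫ t in α..β, vdcRemainder lam (t - T) (f t) (f' t) (p t) (q t) * osc lam (ψ t) =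
      f β * ((β - T : ℝ) / vdcDenom lam (β - T) (p β)) * osc lam (ψ β) -
        f α * ((α - T : ℝ) / vdcDenom lam (α - T) (p α)) * osc lam (ψ α) := by
  have hfc : ContinuousOn f (Icc α β) := HasDerivAt.continuousOn hf
  have hpc : ContinuousOn p (Icc α β) := HasDerivAt.continuousOn hp
  have hR := continuousOn_vdcRemainder (lam := lam) (T := T) hfc hf' hpc hq
  rw [← uIcc_of_le hαβ] at *
  have hi₁ := intervalIntegrable_mul_osc (lam := lam) (g := fun t => f t) (by fun_prop) hψ
  have hi₂ := intervalIntegrable_mul_osc (lam := lam) hR hψ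
  rw [← intervalIntegral.integral_add hi₁ hi₂]
  exact intervalIntegral.integral_eq_sub_of_hasDerivAt
    (fun t ht => hasDerivAt_mul_div_vdcDenom (hf t ht) (hψ t ht) (hp t ht)) (hi₁.add hi₂)

include hT hpT

theorem norm_integral_mul_osc_le_of_le_deriv2 (hlam : 0 < lam) (hc : 0 < c)
    (hqc : ∀ t ∈ Icc α β, c ≤ q t) (hqL : ∀ t ∈ Icc α β, q t ≤ L)
    (hM : ∀ t ∈ Icc α β, |f t| ≤ M) (hM' : ∀ t ∈ Icc α β, |f' t| ≤ M') :
    ‖∫ t in α..β, f t * osc lam (ψ t)‖ ≤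
      (2 * M + 2 * π * (M' * (β - α) + 2 * M * L / c)) / √(c * lam) := by
  have hpq : ∀ t ∈ Icc α β, c * (t - T) ^ 2 ≤ (t - T) * p t ∧ (t - T) * p t ≤ L * (t - T) ^ 2 := by
    intro t ht
    have hl := mul_sq_le_mul_sub (convex_Icc α β) hp hq hqc hT ht
    have hu := mul_sub_le_mul_sq (convex_Icc α β) hp hq hqL hT ht
    rw [hpT, sub_zero] at hl hu
    exact ⟨hl, hu⟩
  have hbdry : ∀ t ∈ Icc α β, ‖f t * ((t - T : ℝ) / vdcDenom lam (t - T) (p t)) *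
      osc lam (ψ t)‖ ≤ M * (1 / √(c * lam)) := by
    intro t ht
    rw [norm_mul, norm_osc, mul_one, norm_mul, Complex.norm_real]
    exact mul_le_mul (hM t ht) (norm_div_vdcDenom_le hlam hc (hpq t ht).1) (norm_nonneg _)
      ((abs_nonneg _).trans (hM t ht))
  set C := 2 * (M' * (β - α) + 2 * M * L / c) with hC
  have hrem : ∀ t ∈ Icc α β,
      ‖vdcRemainder lam (t - T) (f t) (f' t) (p t) (q t) * osc lam (ψ t)‖ ≤
        C * (1 + c * lam * (t - T) ^ 2)⁻¹ := by
    intro t ht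
    rw [norm_mul, norm_osc, mul_one]
    refine norm_vdcRemainder_le hlam hc (hpq t ht).1 (hpq t ht).2
      (abs_le.2 ⟨?_, hqL t ht⟩) (abs_le.2 ⟨?_, ?_⟩) (hM t ht) (hM' t ht)
    · linarith [hqc t ht, hqL t ht]
    · linarith [ht.1, hT.2]
    · linarith [ht.2, hT.1]
  have hC0 : 0 ≤ C := nonneg_of_mul_nonneg_left ((norm_nonneg _).trans (hrem T hT)) (by simp)
  have hint := norm_integral_le_of_norm_le_inv_one_add_mul_sq hαβ (mul_pos hc hlam) hC0 hrem
  rw [eq_sub_of_add_eq (integral_mul_osc_add_integral_vdcRemainder hαβ hψ hp hq hf hf')]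
  calc _ ≤ M * (1 / √(c * lam)) + M * (1 / √(c * lam)) + C * (π / √(c * lam)) :=
        (norm_sub_le _ _).trans (add_le_add ((norm_sub_le _ _).trans
          (add_le_add (hbdry β (right_mem_Icc.2 hαβ)) (hbdry α (left_mem_Icc.2 hαβ)))) hint)
    _ = _ := by rw [hC]; ring

end

end VanDerCorput

/-- The damped oscillating Gaussian `e^{-x²/2} e^{iλx²/2}`. -/
def gaussOsc (lam x : ℝ) : ℂ := Complex.exp (-((1 - Complex.I * lam) / 2) * x ^ 2)

/-- The value of the Fresnel integral `∫ e^{iλsx²/2} dx` over the real line, where `s = ±1`. -/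
def fresnel (s lam : ℝ) : ℂ :=
  Complex.exp (Complex.I * s * π / 4) * (√(2 * π) : ℝ) / (√lam : ℝ)

section Gaussian

variable {b : ℂ} {Y lam δ α β : ℝ}

lemma norm_cexp_neg_mul_sq_le_one (hb : 0 < b.re) (x : ℝ) : ‖Complex.exp (-b * x ^ 2)‖ ≤ 1 := by
  rw [norm_cexp_neg_mul_sq, Real.exp_le_one_iff]
  nlinarith [mul_nonneg hb.le (sq_nonneg x)]

lemma hasDerivAt_gaussian_tail_expansion (hb : b ≠ 0) {x : ℝ} (hx : x ≠ 0) :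
    HasDerivAt
      (fun x : ℝ => -(Complex.exp (-b * x ^ 2) * (1 / (2 * b * x) - 1 / (4 * b ^ 2 * x ^ 3))))
      (Complex.exp (-b * x ^ 2) - 3 / (4 * b ^ 2) * (Complex.exp (-b * x ^ 2) / x ^ 4)) x := by
  have hx' : (x : ℂ) ≠ 0 := Complex.ofReal_ne_zero.2 hx
  have hid := (hasDerivAt_id x).ofReal_comp
  have hexp := ((hid.fun_pow 2).const_mul (-b)).cexp
  have h₁ := (hid.const_mul (2 * b)).fun_inv (by simpa using ⟨hb, hx⟩)
  have h₂ := ((hid.fun_pow 3).const_mul (4 * b ^ 2)).fun_inv (by simpa using ⟨hb, hx⟩)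
  simp only [← one_div] at h₁ h₂
  refine (hexp.fun_mul (h₁.fun_sub h₂)).fun_neg.congr_deriv ?_
  simp only [id_eq]
  field_simp
  push_cast
  ring

lemma tendsto_gaussian_tail_expansion (hb : 0 < b.re) :
    Tendsto
      (fun x : ℝ => -(Complex.exp (-b * x ^ 2) * (1 / (2 * b * x) - 1 / (4 * b ^ 2 * x ^ 3))))
      atTop (𝓝 0) := by
  have hinv : ∀ (a : ℂ) {k : ℕ}, k ≠ 0 →
      Tendsto (fun x : ℝ => 1 / (a * (x : ℂ) ^ k)) atTop (𝓝 0) := fun a k hk => by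
    have h := ((tendsto_inv_atTop_zero (𝕜 := ℝ)).pow k).ofReal.const_mul a⁻¹
    simpa [zero_pow hk, mul_comm] using h
  have h := (hinv (2 * b) one_ne_zero).sub (hinv (4 * b ^ 2) three_ne_zero)
  simp only [pow_one, sub_zero] at h
  have hbdd := isBoundedUnder_of (f := atTop) (r := (· ≤ ·))
    ⟨1, fun x : ℝ => norm_cexp_neg_mul_sq_le_one hb x⟩
  simpa only [neg_zero, mul_comm] using (h.zero_mul_isBoundedUnder_le hbdd).neg

lemma integrableOn_Ioi_inv_pow_four (hY : 0 < Y) :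
    IntegrableOn (fun x : ℝ => (x ^ 4)⁻¹) (Ioi Y) := by
  have h := integrableOn_Ioi_rpow_of_lt (show (-4 : ℝ) < -1 by norm_num) hY
  refine h.congr_fun (fun x hx => ?_) measurableSet_Ioi
  simp only [rpow_neg (hY.trans hx).le, rpow_ofNat]

lemma integral_Ioi_inv_pow_four (hY : 0 < Y) : ∫ x in Ioi Y, (x ^ 4)⁻¹ = 1 / (3 * Y ^ 3) := by
  have h := integral_Ioi_rpow_of_lt (show (-4 : ℝ) < -1 by norm_num) hY
  rw [show (-4 : ℝ) + 1 = -3 by norm_num, rpow_neg hY.le, rpow_ofNat] at h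
  rw [← setIntegral_congr_fun measurableSet_Ioi fun x (hx : Y < x) => ?_, h]
  · field_simp
  · simp only [rpow_neg (hY.trans hx).le, rpow_ofNat]

lemma norm_integral_Ioi_gaussian_sub_le (hb : 0 < b.re) (hY : 0 < Y) :
    ‖(∫ x in Ioi Y, Complex.exp (-b * x ^ 2)) - Complex.exp (-b * Y ^ 2) / (2 * b * Y)‖ ≤
      1 / (2 * ‖b‖ ^ 2 * Y ^ 3) := by
  have hb0 : b ≠ 0 := by rintro rfl; simp at hb
  have hle : ∀ x ∈ Ioi Y, ‖Complex.exp (-b * x ^ 2) / x ^ 4‖ ≤ (x ^ 4)⁻¹ := fun x _ => by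
    rw [norm_div, norm_pow, Complex.norm_real, norm_eq_abs, Even.pow_abs (by decide),
      div_eq_mul_inv]
    exact mul_le_of_le_one_left (by positivity) (norm_cexp_neg_mul_sq_le_one hb x)
  have hi := (integrable_cexp_neg_mul_sq hb).integrableOn (s := Ioi Y)
  have hi₄ : IntegrableOn (fun x : ℝ => Complex.exp (-b * x ^ 2) / x ^ 4) (Ioi Y) :=
    (integrableOn_Ioi_inv_pow_four hY).mono' (Measurable.aestronglyMeasurable (by fun_prop))
      ((ae_restrict_iff' measurableSet_Ioi).2 (Eventually.of_forall hle))
  have hrest : ‖∫ x in Ioi Y, Complex.exp (-b * x ^ 2) / x ^ 4‖ ≤ 1 / (3 * Y ^ 3) := by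
    rw [← integral_Ioi_inv_pow_four hY]
    exact norm_integral_le_of_norm_le (integrableOn_Ioi_inv_pow_four hY)
      ((ae_restrict_iff' measurableSet_Ioi).2 (Eventually.of_forall hle))
  have hparts := integral_Ioi_of_hasDerivAt_of_tendsto'
    (fun x hx => hasDerivAt_gaussian_tail_expansion hb0 (hY.trans_le hx).ne')
    (hi.sub (hi₄.const_mul _)) (tendsto_gaussian_tail_expansion hb)
  rw [integral_sub hi (hi₄.const_mul _), integral_const_mul, sub_eq_iff_eq_add] at hparts
  rw [hparts]
  calc _ = ‖3 / (4 * b ^ 2) * (∫ x in Ioi Y, Complex.exp (-b * x ^ 2) / x ^ 4) -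
          Complex.exp (-b * Y ^ 2) * (1 / (4 * b ^ 2 * Y ^ 3))‖ := by congr 1; ring
    _ ≤ 3 / (4 * ‖b‖ ^ 2) * (1 / (3 * Y ^ 3)) + 1 * (1 / (4 * ‖b‖ ^ 2 * Y ^ 3)) := by
      refine (norm_sub_le _ _).trans (add_le_add ?_ ?_)
      · rw [norm_mul]
        exact mul_le_mul (by simp) hrest (norm_nonneg _) (by positivity)
      · rw [norm_mul]
        exact mul_le_mul (norm_cexp_neg_mul_sq_le_one hb Y) (by simp [abs_of_pos hY])
          (norm_nonneg _) zero_le_one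
    _ = _ := by field_simp; norm_num

lemma re_one_sub_I_mul_div_two_pos (lam : ℝ) : 0 < ((1 - Complex.I * lam) / 2).re := by simp

lemma one_sub_I_mul_ne_zero (lam : ℝ) : 1 - Complex.I * (lam : ℂ) ≠ 0 := fun h => by
  simpa using congrArg Complex.re h

lemma le_norm_one_sub_I_mul (lam : ℝ) : lam ≤ ‖1 - Complex.I * (lam : ℂ)‖ :=
  (le_abs_self lam).trans (by simpa using Complex.abs_im_le_norm (1 - Complex.I * (lam : ℂ)))

lemma gaussOsc_neg (lam x : ℝ) : gaussOsc lam (-x) = gaussOsc lam x := by simp [gaussOsc]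

lemma norm_gaussOsc_le_one (lam x : ℝ) : ‖gaussOsc lam x‖ ≤ 1 :=
  norm_cexp_neg_mul_sq_le_one (re_one_sub_I_mul_div_two_pos lam) x

lemma gaussOsc_eq (lam x : ℝ) : gaussOsc lam x = rexp (-(x ^ 2 / 2)) * osc lam (x ^ 2 / 2) := by
  rw [gaussOsc, osc, Complex.ofReal_exp, ← Complex.exp_add]
  congr 1
  push_cast
  ring

lemma integrable_gaussOsc (lam : ℝ) : Integrable (gaussOsc lam) :=
  integrable_cexp_neg_mul_sq (re_one_sub_I_mul_div_two_pos lam)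

lemma norm_integral_Ioi_gaussOsc_add_le (hlam : 0 < lam) (hY : 0 < Y) :
    ‖(∫ x in Ioi Y, gaussOsc lam x) + gaussOsc lam Y / (Complex.I * lam * Y)‖ ≤
      (2 / Y ^ 3 + 1 / Y) / lam ^ 2 := by
  set z := 1 - Complex.I * (lam : ℂ)
  have hz : lam ≤ ‖z‖ := le_norm_one_sub_I_mul lam
  have hz0 : z ≠ 0 := one_sub_I_mul_ne_zero lam
  have hY0 : (Y : ℂ) ≠ 0 := Complex.ofReal_ne_zero.2 hY.ne'
  have hlam0 : (lam : ℂ) ≠ 0 := Complex.ofReal_ne_zero.2 hlam.ne'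
  have htail := norm_integral_Ioi_gaussian_sub_le (re_one_sub_I_mul_div_two_pos lam) hY
  have hmain : gaussOsc lam Y / (2 * (z / 2) * Y) + gaussOsc lam Y / (Complex.I * lam * Y) =
      gaussOsc lam Y / (Complex.I * lam * z * Y) := by
    field_simp
    ring
  calc ‖(∫ x in Ioi Y, gaussOsc lam x) + gaussOsc lam Y / (Complex.I * lam * Y)‖
    _ = ‖((∫ x in Ioi Y, gaussOsc lam x) - gaussOsc lam Y / (2 * (z / 2) * Y)) +
          gaussOsc lam Y / (Complex.I * lam * z * Y)‖ := by rw [← hmain]; congr 1; ring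
    _ ≤ 1 / (2 * ‖z / 2‖ ^ 2 * Y ^ 3) + 1 / (lam * ‖z‖ * Y) := by
      refine (norm_add_le _ _).trans (add_le_add htail ?_)
      simp only [norm_div, norm_mul, Complex.norm_I, one_mul, Complex.norm_real,
        norm_of_nonneg hlam.le, norm_of_nonneg hY.le]
      gcongr
      exact norm_gaussOsc_le_one lam Y
    _ = 2 / (‖z‖ ^ 2 * Y ^ 3) + 1 / (lam * ‖z‖ * Y) := by
      rw [norm_div, Complex.norm_ofNat]
      congr 1
      field_simp
    _ ≤ 2 / (lam ^ 2 * Y ^ 3) + 1 / (lam * lam * Y) := by gcongr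
    _ = (2 / Y ^ 3 + 1 / Y) / lam ^ 2 := by field_simp

lemma fresnel_sq (hlam : 0 < lam) : fresnel 1 lam ^ 2 = 2 * π * Complex.I / lam := by
  have hexp : Complex.exp (Complex.I * (1 : ℝ) * π / 4) ^ 2 = Complex.I := by
    rw [← Complex.exp_nat_mul, show ((2 : ℕ) : ℂ) * (Complex.I * (1 : ℝ) * π / 4) =
      π / 2 * Complex.I by push_cast; ring, Complex.exp_pi_div_two_mul_I]
  rw [fresnel, div_pow, mul_pow, hexp, ← Complex.ofReal_pow, ← Complex.ofReal_pow,
    Real.sq_sqrt (by positivity), Real.sq_sqrt hlam.le]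
  push_cast
  ring

lemma fresnel_re (lam : ℝ) : (fresnel 1 lam).re = √π / √lam := by
  have harg : Complex.I * (1 : ℝ) * π / 4 = ((π / 4 : ℝ) : ℂ) * Complex.I := by
    push_cast
    ring
  rw [fresnel, Complex.div_ofReal_re, Complex.re_mul_ofReal, harg, Complex.exp_ofReal_mul_I_re,
    cos_pi_div_four, Real.sqrt_mul zero_le_two]
  congr 1
  linear_combination √π / 2 * Real.mul_self_sqrt (zero_le_two (α := ℝ))

-- Both numbers lie in the right half-plane, so they are close because their squares are.
lemma norm_integral_gaussOsc_sub_fresnel_le (hlam : 0 < lam) :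
    ‖(∫ x, gaussOsc lam x) - fresnel 1 lam‖ ≤ 2 * √π / (lam * √lam) := by
  set J := ∫ x, gaussOsc lam x
  have hJ : J = (π / ((1 - Complex.I * lam) / 2)) ^ (2⁻¹ : ℂ) := by
    rw [← one_div]
    exact integral_gaussian_complex (re_one_sub_I_mul_div_two_pos lam)
  have hJre : 0 ≤ J.re := by
    rw [hJ, Complex.cpow_inv_two_re]
    positivity
  have hJsq : J ^ 2 = π / ((1 - Complex.I * lam) / 2) := by
    rw [hJ]
    exact_mod_cast Complex.cpow_nat_inv_pow _ two_ne_zero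
  have hsub : ‖J ^ 2 - fresnel 1 lam ^ 2‖ ≤ 2 * π / lam ^ 2 := by
    have hz0 := one_sub_I_mul_ne_zero lam
    have hlam0 : (lam : ℂ) ≠ 0 := Complex.ofReal_ne_zero.2 hlam.ne'
    have heq : J ^ 2 - fresnel 1 lam ^ 2 =
        -(2 * π * Complex.I) / (lam * (1 - Complex.I * lam)) := by
      rw [hJsq, fresnel_sq hlam]
      field_simp
      linear_combination lam * Complex.I_sq
    rw [heq, norm_div, norm_neg]
    simp only [norm_mul, Complex.norm_ofNat, Complex.norm_I, Complex.norm_real, mul_one,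
      norm_of_nonneg hlam.le, norm_of_nonneg pi_pos.le, pow_two]
    gcongr
    exact le_norm_one_sub_I_mul lam
  have hadd : √π / √lam ≤ ‖J + fresnel 1 lam‖ := calc
    √π / √lam ≤ (J + fresnel 1 lam).re := by
      rw [Complex.add_re, fresnel_re]
      exact le_add_of_nonneg_left hJre
    _ ≤ ‖J + fresnel 1 lam‖ := Complex.re_le_norm _
  have hmul : ‖J - fresnel 1 lam‖ * (√π / √lam) ≤ 2 * π / lam ^ 2 := by
    refine (mul_le_mul_of_nonneg_left hadd (norm_nonneg _)).trans ?_
    rwa [← norm_mul, mul_comm, ← sq_sub_sq]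
  rw [← le_div_iff₀ (by positivity)] at hmul
  refine hmul.trans_eq ?_
  have hπ := Real.mul_self_sqrt pi_pos.le
  have hl := Real.mul_self_sqrt hlam.le
  field_simp
  linear_combination -hπ * lam + hl * π

lemma integral_gaussOsc_eq (lam α β : ℝ) : ∫ x in α..β, gaussOsc lam x =
    (∫ x, gaussOsc lam x) - (∫ x in Ioi (-α), gaussOsc lam x) - ∫ x in Ioi β, gaussOsc lam x := by
  have hi := integrable_gaussOsc lam
  have hα := integral_comp_neg_Iic α (gaussOsc lam)
  simp only [gaussOsc_neg] at hα
  rw [← intervalIntegral.integral_Iic_sub_Iic hi.integrableOn hi.integrableOn,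
    ← intervalIntegral.integral_Iic_add_Ioi (b := β) hi.integrableOn hi.integrableOn, ← hα]
  ring

lemma one_div_sq_le_one_div_mul_sqrt (hlam : 1 ≤ lam) : 1 / lam ^ 2 ≤ 1 / (lam * √lam) := by
  rw [pow_two]
  gcongr
  exact Real.sqrt_le_self_iff.2 (Or.inr hlam)

lemma norm_integral_gaussOsc_sub_le (hlam : 1 ≤ lam) (hδ : 0 < δ) (hα : α ≤ -δ) (hβ : δ ≤ β) :
    ‖(∫ x in α..β, gaussOsc lam x) -
        (fresnel 1 lam + (gaussOsc lam β / β - gaussOsc lam α / α) / (Complex.I * lam))‖ ≤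
      (2 * √π + 2 * (2 / δ ^ 3 + 1 / δ)) / (lam * √lam) := by
  have hlam0 : 0 < lam := one_pos.trans_le hlam
  have hα0 : 0 < -α := by linarith
  have hβ0 : 0 < β := hδ.trans_le hβ
  have hαt := norm_integral_Ioi_gaussOsc_add_le hlam0 hα0
  have hβt := norm_integral_Ioi_gaussOsc_add_le hlam0 hβ0
  rw [gaussOsc_neg] at hαt
  have hmono : ∀ y, δ ≤ y → (2 / y ^ 3 + 1 / y) / lam ^ 2 ≤
      (2 / δ ^ 3 + 1 / δ) * (1 / (lam * √lam)) := fun y hy => by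
    rw [div_eq_mul_one_div]
    gcongr ?_ * ?_
    · gcongr
    · exact one_div_sq_le_one_div_mul_sqrt hlam
  rw [integral_gaussOsc_eq]
  calc _ = ‖((∫ x, gaussOsc lam x) - fresnel 1 lam) -
          ((∫ x in Ioi (-α), gaussOsc lam x) +
            gaussOsc lam α / (Complex.I * lam * (-α : ℝ))) -
          ((∫ x in Ioi β, gaussOsc lam x) + gaussOsc lam β / (Complex.I * lam * β))‖ := by
        congr 1
        push_cast
        ring
    _ ≤ 2 * √π / (lam * √lam) + (2 / δ ^ 3 + 1 / δ) * (1 / (lam * √lam)) +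
          (2 / δ ^ 3 + 1 / δ) * (1 / (lam * √lam)) :=
      (norm_sub_le _ _).trans (add_le_add ((norm_sub_le _ _).trans (add_le_add
        (norm_integral_gaussOsc_sub_fresnel_le hlam0)
        (hαt.trans (hmono _ (by linarith))))) (hβt.trans (hmono _ hβ)))
    _ = _ := by ring

end Gaussian

section MorseCoordinate

section

variable {Ω : Set ℝ} {T t : ℝ} {ψ p m κ : ℝ → ℝ}

lemma eq_sq_mul_segAvg (hΩc : Convex ℝ Ω) (hT : T ∈ Ω)
    (hψ : ∀ t ∈ Ω, HasDerivAt ψ (p t) t) (hp : ContinuousOn p Ω) (hψT : ψ T = 0)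
    (hpm : ∀ t ∈ Ω, p t = (t - T) * m t) (ht : t ∈ Ω) :
    ψ t = (t - T) ^ 2 * segAvg (fun θ => 2 * θ) m T t / 2 := by
  have hp' : segAvg (fun _ => 1) p T t = (t - T) / 2 * segAvg (fun θ => 2 * θ) m T t := by
    rw [segAvg, segAvg, ← intervalIntegral.integral_const_mul]
    refine intervalIntegral.integral_congr fun θ hθ => ?_
    simp only [hpm _ (add_mul_sub_mem hΩc hT ht hθ)]
    ring
  linear_combination sub_eq_mul_segAvg hΩc hψ hp hT ht + hψT + (t - T) * hp'

lemma two_mul_add_mul_deriv_eq_two_mul (hΩ : IsOpen Ω) (hψ : ∀ t ∈ Ω, HasDerivAt ψ (p t) t)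
    (hpm : ∀ t ∈ Ω, p t = (t - T) * m t) (hψκ : ∀ t ∈ Ω, ψ t = (t - T) ^ 2 * κ t / 2)
    (hκT : κ T = m T) (ht : t ∈ Ω) {k : ℝ} (hκ : HasDerivAt κ k t) :
    2 * κ t + (t - T) * k = 2 * m t := by
  rcases eq_or_ne (t - T) 0 with hu | hu
  · rw [sub_eq_zero.1 hu, hκT]
    ring
  · have hd : HasDerivAt (fun t => (t - T) ^ 2 * κ t / 2)
        ((2 * (t - T) * κ t + (t - T) ^ 2 * k) / 2) t :=
      (((((hasDerivAt_id t).sub_const T).fun_pow 2).fun_mul hκ).div_const 2).congr_deriv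
        (by simp)
    have hp := (hψ t ht).unique (hd.congr_of_eventuallyEq
      (eventuallyEq_of_mem (hΩ.mem_nhds ht) hψκ))
    rw [hpm t ht] at hp
    refine mul_left_cancel₀ hu ?_
    linear_combination -2 * hp

lemma hasDerivAt_sub_mul_sqrt (hκ0 : 0 < κ t) {k : ℝ} (hκ : HasDerivAt κ k t)
    (hm : 2 * κ t + (t - T) * k = 2 * m t) :
    HasDerivAt (fun t => (t - T) * √(κ t)) (m t / √(κ t)) t := by
  refine (((hasDerivAt_id t).sub_const T).fun_mul (hκ.sqrt hκ0.ne')).congr_deriv ?_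
  have hsqrt : √(κ t) ≠ 0 := (Real.sqrt_pos.2 hκ0).ne'
  have hsq := Real.mul_self_sqrt hκ0.le
  simp only [id_eq]
  field_simp
  linear_combination hm + 2 * hsq

end

variable {ι : Type*} {Ω : Set ℝ} {F : ι → ℝ → ℝ} {n : ℕ} {c : ℝ} {T : ι → ℝ}

lemma UnifContDiffOn.sqrt (hc : 0 < c) (hF : UnifContDiffOn n F Ω)
    (hFc : ∀ i, ∀ t ∈ Ω, c ≤ F i t) : UnifContDiffOn n (fun i t => √(F i t)) Ω := by
  obtain ⟨M, hM⟩ := hF.unifBddOn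
  exact hF.comp isOpen_Ioi (isCompact_Icc (a := c) (b := M)) (fun x hx => hc.trans_le hx.1)
    (contDiffOn_id.sqrt fun x hx => (mem_Ioi.1 hx).ne')
    fun i t ht => ⟨hFc i t ht, (le_abs_self _).trans (hM i t ht)⟩

variable {ψ p q : ι → ℝ → ℝ}

theorem exists_morse_coordinate (hΩ : IsOpen Ω) (hΩc : Convex ℝ Ω) (hΩb : Bornology.IsBounded Ω)
    (hT : ∀ i, T i ∈ Ω) (hψ : ∀ i, ∀ t ∈ Ω, HasDerivAt (ψ i) (p i t) t)
    (hp : ∀ i, ∀ t ∈ Ω, HasDerivAt (p i) (q i t) t) (hq : UnifContDiffOn (n + 1) q Ω) (hc : 0 < c)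
    (hqc : ∀ i, ∀ t ∈ Ω, c ≤ q i t) (hψT : ∀ i, ψ i (T i) = 0) (hpT : ∀ i, p i (T i) = 0) :
    ∃ y w : ι → ℝ → ℝ, UnifContDiffOn (n + 1) y Ω ∧ UnifContDiffOn (n + 1) w Ω ∧
      (∃ δ > 0, ∀ i, ∀ t ∈ Ω, δ ≤ w i t) ∧ (∀ i, w i (T i) = √(q i (T i))) ∧
      ∀ i, ∀ t ∈ Ω, HasDerivAt (y i) (w i t) t ∧ ψ i t = y i t ^ 2 / 2 := by
  set m := fun i => segAvg (fun _ => 1) (q i) (T i)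
  set κ := fun i => segAvg (fun θ => 2 * θ) (m i) (T i)
  have hm : UnifContDiffOn (n + 1) m Ω := hq.segAvg hΩc hΩ hT continuous_const
  have hκ : UnifContDiffOn (n + 1) κ Ω := hm.segAvg hΩc hΩ hT (by fun_prop)
  have hmc : ∀ i, ∀ t ∈ Ω, c ≤ m i t := fun i _ =>
    le_segAvg hΩc continuous_const (by simp) (by simp) (hq.continuousOn i) (hqc i) (hT i)
  have hw : ∫ θ in (0 : ℝ)..1, 2 * θ = 1 := by
    rw [intervalIntegral.integral_const_mul, integral_id]
    norm_num
  have hκc : ∀ i, ∀ t ∈ Ω, c ≤ κ i t := fun i _ => le_segAvg hΩc (by fun_prop)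
    (fun θ hθ => mul_nonneg zero_le_two hθ.1) hw (hm.continuousOn i) (hmc i) (hT i)
  have hmT : ∀ i, m i (T i) = q i (T i) := fun i => by simp [m, segAvg_self]
  have hκT : ∀ i, κ i (T i) = m i (T i) := fun i => by simp only [κ, segAvg_self, hw, one_mul]
  have hpm : ∀ i, ∀ t ∈ Ω, p i t = (t - T i) * m i t := fun i t ht => by
    rw [← sub_eq_mul_segAvg hΩc (hp i) (hq.continuousOn i) (hT i) ht, hpT i, sub_zero]
  have hψκ : ∀ i, ∀ t ∈ Ω, ψ i t = (t - T i) ^ 2 * κ i t / 2 := fun i t ht =>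
    eq_sq_mul_segAvg hΩc (hT i) (hψ i) (HasDerivAt.continuousOn (hp i)) (hψT i) (hpm i) ht
  have hsqrt := hκ.sqrt hc hκc
  have hTb : ∃ M, ∀ i, |T i| ≤ M :=
    (isBounded_iff_forall_norm_le.1 hΩb).imp fun _ hM i => hM _ (hT i)
  have hsqrtc : ∀ i, ∀ t ∈ Ω, √c ≤ √(κ i t) := fun i t ht => Real.sqrt_le_sqrt (hκc i t ht)
  refine ⟨fun i t => (t - T i) * √(κ i t), fun i t => m i t / √(κ i t),
    ((UnifContDiffOn.id hΩb).sub (UnifContDiffOn.const hTb)).mul hsqrt,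
    hm.div hΩ (Real.sqrt_pos.2 hc) hsqrt fun i t ht => (hsqrtc i t ht).trans (le_abs_self _),
    ?_, fun i => ?_, fun i t ht => ⟨?_, ?_⟩⟩
  · obtain ⟨M, hM⟩ := hsqrt.unifBddOn
    refine ⟨c / max M 1, by positivity, fun i t ht => ?_⟩
    have hpos := (Real.sqrt_pos.2 hc).trans_le (hsqrtc i t ht)
    exact div_le_div₀ (hc.le.trans (hmc i t ht)) (hmc i t ht) hpos
      (((le_abs_self _).trans (hM i t ht)).trans (le_max_left _ _))
  · simp only [hκT, hmT, Real.div_sqrt]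
  · obtain ⟨-, k, hk, -⟩ := hκ
    exact hasDerivAt_sub_mul_sqrt (hc.trans_le (hκc i t ht)) (hk i t ht)
      (two_mul_add_mul_deriv_eq_two_mul hΩ (hψ i) (hpm i) (hψκ i) (hκT i) ht (hk i t ht))
  · simp only [mul_pow, Real.sq_sqrt (hc.le.trans (hκc i t ht)), hψκ i t ht]

theorem exists_eq_mul_of_eq_zero {D : ι → ℝ → ℝ} (hΩ : IsOpen Ω) (hΩc : Convex ℝ Ω)
    (hT : ∀ i, T i ∈ Ω) (hp : ∀ i, ∀ t ∈ Ω, HasDerivAt (p i) (q i t) t)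
    (hq : UnifContDiffOn n q Ω) (hc : 0 < c) (hqc : ∀ i, ∀ t ∈ Ω, c ≤ q i t)
    (hpT : ∀ i, p i (T i) = 0) (hD : UnifContDiffOn (n + 1) D Ω) (hDT : ∀ i, D i (T i) = 0) :
    ∃ h : ι → ℝ → ℝ, UnifContDiffOn n h Ω ∧ ∀ i, ∀ t ∈ Ω, D i t = h i t * p i t := by
  obtain ⟨-, D', hD', hD''⟩ := hD
  have hD₁ := hD''.segAvg (w := fun _ => 1) hΩc hΩ hT continuous_const
  have hm : UnifContDiffOn n (fun i => segAvg (fun _ => 1) (q i) (T i)) Ω :=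
    hq.segAvg hΩc hΩ hT continuous_const
  have hmc : ∀ i, ∀ t ∈ Ω, c ≤ segAvg (fun _ => 1) (q i) (T i) t := fun i _ =>
    le_segAvg hΩc continuous_const (by simp) (by simp) (hq.continuousOn i) (hqc i) (hT i)
  refine ⟨_, hD₁.div hΩ hc hm fun i t ht => (hmc i t ht).trans (le_abs_self _), fun i t ht => ?_⟩
  have hDm := sub_eq_mul_segAvg hΩc (hD' i) (hD''.continuousOn i) (hT i) ht
  have hpm := sub_eq_mul_segAvg hΩc (hp i) (hq.continuousOn i) (hT i) ht
  have hne := (hc.trans_le (hmc i t ht)).ne'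
  rw [hDT i, sub_zero] at hDm
  rw [hpT i, sub_zero] at hpm
  rw [hDm, hpm]
  field_simp

end MorseCoordinate

section StationaryPhase

variable {ι : Type*} {Ω : Set ℝ} {T : ι → ℝ} {ψ p q F : ι → ℝ → ℝ} {n : ℕ} {α β c : ℝ}

lemma exists_eq_gaussian_add_mul_deriv (hΩ : IsOpen Ω) (hΩc : Convex ℝ Ω)
    (hΩb : Bornology.IsBounded Ω) (hT : ∀ i, T i ∈ Ω)
    (hψ : ∀ i, ∀ t ∈ Ω, HasDerivAt (ψ i) (p i t) t)
    (hp : ∀ i, ∀ t ∈ Ω, HasDerivAt (p i) (q i t) t) (hq : UnifContDiffOn (n + 1) q Ω) (hc : 0 < c)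
    (hqc : ∀ i, ∀ t ∈ Ω, c ≤ q i t) (hψT : ∀ i, ψ i (T i) = 0) (hpT : ∀ i, p i (T i) = 0)
    (hF : UnifContDiffOn (n + 1) F Ω) :
    ∃ y w h : ι → ℝ → ℝ, (∀ i, ContinuousOn (w i) Ω) ∧ UnifContDiffOn n h Ω ∧
      (∃ δ > 0, ∀ i, ∀ t ∈ Ω, δ ≤ w i t) ∧
      (∀ i, ∀ t ∈ Ω, HasDerivAt (y i) (w i t) t ∧ ψ i t = y i t ^ 2 / 2) ∧
      ∀ i, ∀ t ∈ Ω, F i t =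
        F i (T i) / √(q i (T i)) * (w i t * rexp (-(y i t ^ 2 / 2))) + h i t * p i t := by
  obtain ⟨y, w, hy, hw, ⟨δ, hδ, hwδ⟩, hwT, hyψ⟩ :=
    exists_morse_coordinate hΩ hΩc hΩb hT hψ hp hq hc hqc hψT hpT
  have hqT : ∀ i, √c ≤ √(q i (T i)) := fun i => Real.sqrt_le_sqrt (hqc i _ (hT i))
  have ha : UnifContDiffOn (n + 1) (fun i _ => F i (T i) / √(q i (T i))) Ω := by
    obtain ⟨M, hM0, hM⟩ := hF.unifBddOn.exists_nonneg
    refine UnifContDiffOn.const ⟨M / √c, fun i => ?_⟩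
    rw [abs_div, abs_of_nonneg (Real.sqrt_nonneg _)]
    exact div_le_div₀ hM0 (hM i _ (hT i)) (Real.sqrt_pos.2 hc) (hqT i)
  have hexp : UnifContDiffOn (n + 1) (fun i t => rexp (-(y i t ^ 2 / 2))) Ω := by
    obtain ⟨M, hM⟩ := hy.unifBddOn
    exact hy.comp (Φ := fun x => rexp (-(x ^ 2 / 2))) isOpen_univ (isCompact_Icc (a := -M) (b := M))
      (subset_univ _) (by fun_prop) fun i t ht => abs_le.1 (hM i t ht)
  have hyT : ∀ i, y i (T i) ^ 2 / 2 = 0 := fun i => by rw [← (hyψ i _ (hT i)).2, hψT]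
  obtain ⟨h, hh, hhp⟩ := exists_eq_mul_of_eq_zero hΩ hΩc hT hp hq.of_succ hc hqc hpT
    (hF.sub (ha.mul (hw.mul hexp))) fun i => by
      have := ((Real.sqrt_pos.2 hc).trans_le (hqT i)).ne'
      rw [hyT, hwT, neg_zero, Real.exp_zero, mul_one, div_mul_cancel₀ _ this, sub_self]
  exact ⟨y, w, h, hw.continuousOn, hh, ⟨δ, hδ, hwδ⟩, hyψ,
    fun i t ht => by rw [← hhp i t ht, add_sub_cancel]⟩

lemma integral_gaussian_mul_osc_eq {y w ψ : ℝ → ℝ} (hw : ContinuousOn w (uIcc α β))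
    (hy : ∀ t ∈ uIcc α β, HasDerivAt y (w t) t ∧ ψ t = y t ^ 2 / 2) (lam : ℝ) :
    ∫ t in α..β, (w t * rexp (-(y t ^ 2 / 2)) : ℝ) * osc lam (ψ t) =
      ∫ x in y α..y β, gaussOsc lam x := by
  have hg : Continuous (gaussOsc lam) := by unfold gaussOsc; fun_prop
  rw [← intervalIntegral.integral_deriv_smul_comp (fun t ht => (hy t ht).1) hw hg]
  refine intervalIntegral.integral_congr fun t ht => ?_
  simp only [Function.comp_apply, gaussOsc_eq, (hy t ht).2, Complex.real_smul, Complex.ofReal_mul,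
    mul_assoc]

lemma exists_norm_integral_mul_deriv_mul_osc_sub_le {h : ι → ℝ → ℝ}
    (hsub : Icc α β ⊆ Ω) (hT : ∀ i, T i ∈ Icc α β)
    (hψ : ∀ i, ∀ t ∈ Ω, HasDerivAt (ψ i) (p i t) t)
    (hp : ∀ i, ∀ t ∈ Ω, HasDerivAt (p i) (q i t) t) (hq : UnifContDiffOn 0 q Ω) (hc : 0 < c)
    (hqc : ∀ i, ∀ t ∈ Ω, c ≤ q i t) (hpT : ∀ i, p i (T i) = 0) (hh : UnifContDiffOn 2 h Ω) :
    ∃ B : ℝ, 0 ≤ B ∧ ∀ i, ∀ lam : ℝ, 0 < lam →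
      ‖(∫ t in α..β, (h i t * p i t : ℝ) * osc lam (ψ i t)) -
        (h i β * osc lam (ψ i β) - h i α * osc lam (ψ i α)) / (Complex.I * lam)‖ ≤
        B / (lam * √lam) := by
  obtain ⟨-, h', hh', ⟨M, hM⟩, h'', hh'', ⟨M', hM'⟩, hh''c⟩ := hh
  obtain ⟨L, hL⟩ := hq.unifBddOn
  set C := (2 * M + 2 * π * (M' * (β - α) + 2 * M * L / c)) / √c with hC
  have hvdc : ∀ i, ∀ lam : ℝ, 0 < lam →
      ‖∫ t in α..β, h' i t * osc lam (ψ i t)‖ ≤ C / √lam := fun i lam hlam => by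
    have hαβ := (hT i).1.trans (hT i).2
    rw [hC, div_div, ← Real.sqrt_mul hc.le]
    exact norm_integral_mul_osc_le_of_le_deriv2 hαβ (hT i) (hpT i) (fun t ht => hψ i t (hsub ht))
      (fun t ht => hp i t (hsub ht)) ((hq.continuousOn i).mono hsub)
      (fun t ht => hh'' i t (hsub ht)) ((hh''c i).mono hsub) hlam hc
      (fun t ht => hqc i t (hsub ht)) (fun t ht => (le_abs_self _).trans (hL i t (hsub ht)))
      (fun t ht => hM i t (hsub ht)) (fun t ht => hM' i t (hsub ht))
  refine ⟨|C|, abs_nonneg C, fun i lam hlam => ?_⟩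
  rw [← uIcc_of_le ((hT i).1.trans (hT i).2)] at hsub
  have hIBP := integral_mul_deriv_mul_osc (lam := lam) (fun t ht => hh' i t (hsub ht))
    (HasDerivAt.continuousOn fun t ht => hh'' i t (hsub ht)) (fun t ht => hψ i t (hsub ht))
    (HasDerivAt.continuousOn fun t ht => hp i t (hsub ht))
  have hlam' : (lam : ℂ) ≠ 0 := Complex.ofReal_ne_zero.2 hlam.ne'
  have heq : (∫ t in α..β, (h i t * p i t : ℝ) * osc lam (ψ i t)) -
      (h i β * osc lam (ψ i β) - h i α * osc lam (ψ i α)) / (Complex.I * lam) =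
      -(∫ t in α..β, h' i t * osc lam (ψ i t)) / (Complex.I * lam) := by
    have := Complex.I_ne_zero
    rw [eq_div_iff (by positivity), sub_mul, div_mul_cancel₀ _ (by positivity)]
    linear_combination hIBP
  rw [heq, norm_div, norm_neg, norm_mul, Complex.norm_I, one_mul, Complex.norm_real,
    norm_of_nonneg hlam.le, mul_comm lam, ← div_div]
  gcongr
  exact (hvdc i lam hlam).trans (by gcongr; exact le_abs_self C)

lemma eq_mul_of_eq_sq_div_two {y w ψ p : ℝ → ℝ} (hΩ : IsOpen Ω)
    (hψ : ∀ t ∈ Ω, HasDerivAt ψ (p t) t)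
    (hy : ∀ t ∈ Ω, HasDerivAt y (w t) t ∧ ψ t = y t ^ 2 / 2) {t : ℝ} (ht : t ∈ Ω) :
    p t = y t * w t := by
  refine ((hψ t ht).congr_of_eventuallyEq (eventuallyEq_of_mem (hΩ.mem_nhds ht)
    fun x hx => (hy x hx).2.symm)).unique (((hy t ht).1.fun_pow 2).div_const 2 |>.congr_deriv ?_)
  ring

lemma ofReal_mul_osc_eq_neg_mul_gaussOsc_div {a h w y : ℝ} (hw : w ≠ 0) (hy : y ≠ 0)
    (h0 : a * (w * rexp (-(y ^ 2 / 2))) + h * (y * w) = 0) (lam : ℝ) :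
    (h : ℂ) * osc lam (y ^ 2 / 2) = -(a * (gaussOsc lam y / y)) := by
  have hh : h = -(a * (rexp (-(y ^ 2 / 2)) / y)) := by
    field_simp
    refine mul_right_cancel₀ hw ?_
    linear_combination h0
  rw [gaussOsc_eq, hh]
  push_cast
  ring

lemma integral_mul_osc_eq_integral_gaussOsc_add {f h y w ψ p : ℝ → ℝ} {a : ℝ}
    (hψ : ∀ t ∈ uIcc α β, HasDerivAt ψ (p t) t) (hp : ContinuousOn p (uIcc α β))
    (hw : ContinuousOn w (uIcc α β)) (hh : ContinuousOn h (uIcc α β))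
    (hy : ∀ t ∈ uIcc α β, HasDerivAt y (w t) t ∧ ψ t = y t ^ 2 / 2)
    (hf : ∀ t ∈ uIcc α β, f t = a * (w t * rexp (-(y t ^ 2 / 2))) + h t * p t) (lam : ℝ) :
    ∫ t in α..β, f t * osc lam (ψ t) = a * (∫ x in y α..y β, gaussOsc lam x) +
      ∫ t in α..β, (h t * p t : ℝ) * osc lam (ψ t) := by
  have hyc := HasDerivAt.continuousOn fun t ht => (hy t ht).1
  have hG : ContinuousOn (fun t => w t * rexp (-(y t ^ 2 / 2))) (uIcc α β) := by fun_prop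
  rw [← integral_gaussian_mul_osc_eq hw hy, ← intervalIntegral.integral_const_mul,
    ← intervalIntegral.integral_add]
  · refine intervalIntegral.integral_congr fun t ht => ?_
    simp only [hf t ht, Complex.ofReal_add, Complex.ofReal_mul]
    ring
  · exact (intervalIntegrable_mul_osc
      (Complex.continuous_ofReal.comp_continuousOn hG) hψ).const_mul _
  · exact intervalIntegrable_mul_osc
      (Complex.continuous_ofReal.comp_continuousOn (hh.mul hp)) hψ

lemma norm_integral_mul_osc_sub_fresnel_le {f h y w ψ p : ℝ → ℝ} {a δ B lam : ℝ} (hΩ : IsOpen Ω)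
    (hαβ : uIcc α β ⊆ Ω) (hψ : ∀ t ∈ Ω, HasDerivAt ψ (p t) t) (hp : ContinuousOn p Ω)
    (hw : ContinuousOn w Ω) (hw0 : ∀ t ∈ Ω, w t ≠ 0) (hh : ContinuousOn h Ω)
    (hy : ∀ t ∈ Ω, HasDerivAt y (w t) t ∧ ψ t = y t ^ 2 / 2)
    (hf : ∀ t ∈ Ω, f t = a * (w t * rexp (-(y t ^ 2 / 2))) + h t * p t)
    (hfα : f α = 0) (hfβ : f β = 0) (hδ : 0 < δ) (hyα : y α ≤ -δ) (hyβ : δ ≤ y β)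
    (hlam : 1 ≤ lam)
    (hB : ‖(∫ t in α..β, (h t * p t : ℝ) * osc lam (ψ t)) -
      (h β * osc lam (ψ β) - h α * osc lam (ψ α)) / (Complex.I * lam)‖ ≤ B / (lam * √lam)) :
    ‖(∫ t in α..β, f t * osc lam (ψ t)) - fresnel 1 lam * a‖ ≤
      (|a| * (2 * √π + 2 * (2 / δ ^ 3 + 1 / δ)) + B) / (lam * √lam) := by
  have hend : ∀ t ∈ Ω, f t = 0 → y t ≠ 0 →
      (h t : ℂ) * osc lam (ψ t) = -(a * (gaussOsc lam (y t) / y t)) := fun t ht hft hyt => by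
    rw [hf t ht, eq_mul_of_eq_sq_div_two hΩ hψ hy ht] at hft
    rw [(hy t ht).2, ofReal_mul_osc_eq_neg_mul_gaussOsc_div (hw0 t ht) hyt hft]
  rw [hend β (hαβ right_mem_uIcc) hfβ (by linarith),
    hend α (hαβ left_mem_uIcc) hfα (by linarith)] at hB
  rw [integral_mul_osc_eq_integral_gaussOsc_add (fun t ht => hψ t (hαβ ht)) (hp.mono hαβ)
    (hw.mono hαβ) (hh.mono hαβ) (fun t ht => hy t (hαβ ht)) (fun t ht => hf t (hαβ ht))]
  have hgauss := norm_integral_gaussOsc_sub_le hlam hδ hyα hyβ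
  -- The endpoint terms of the Gaussian integral and of the integration by parts cancel.
  set E := (gaussOsc lam (y β) / y β - gaussOsc lam (y α) / y α) / (Complex.I * lam) with hE
  calc _ = ‖a * ((∫ x in y α..y β, gaussOsc lam x) - (fresnel 1 lam + E)) +
          ((∫ t in α..β, (h t * p t : ℝ) * osc lam (ψ t)) -
            (-(a * (gaussOsc lam (y β) / y β)) - -(a * (gaussOsc lam (y α) / y α))) /
              (Complex.I * lam))‖ := by
        rw [hE]
        congr 1
        ring
    _ ≤ |a| * ((2 * √π + 2 * (2 / δ ^ 3 + 1 / δ)) / (lam * √lam)) + B / (lam * √lam) := by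
        refine (norm_add_le _ _).trans (add_le_add ?_ hB)
        rw [norm_mul, Complex.norm_real, norm_eq_abs]
        gcongr
    _ = _ := by ring

theorem stationary_phase_of_le_deriv2 {δ : ℝ} (hΩ : IsOpen Ω) (hΩc : Convex ℝ Ω)
    (hΩb : Bornology.IsBounded Ω) (hsub : Icc α β ⊆ Ω) (hδ : 0 < δ)
    (hT : ∀ i, T i ∈ Icc (α + δ) (β - δ))
    (hψ : ∀ i, ∀ t ∈ Ω, HasDerivAt (ψ i) (p i t) t)
    (hp : ∀ i, ∀ t ∈ Ω, HasDerivAt (p i) (q i t) t) (hq : UnifContDiffOn 3 q Ω) (hc : 0 < c)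
    (hqc : ∀ i, ∀ t ∈ Ω, c ≤ q i t) (hψT : ∀ i, ψ i (T i) = 0) (hpT : ∀ i, p i (T i) = 0)
    (hF : UnifContDiffOn 3 F Ω) (hFα : ∀ i, F i α = 0) (hFβ : ∀ i, F i β = 0) :
    ∃ B : ℝ, 0 ≤ B ∧ ∀ i, ∀ lam : ℝ, 1 ≤ lam →
      ‖(∫ t in α..β, F i t * osc lam (ψ i t)) -
        fresnel 1 lam * (F i (T i) / √(q i (T i)) : ℝ)‖ ≤ B / (lam * √lam) := by
  have hTα : ∀ i, α + δ ≤ T i := fun i => (hT i).1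
  have hTβ : ∀ i, T i ≤ β - δ := fun i => (hT i).2
  have hTm : ∀ i, T i ∈ Icc α β := fun i => ⟨by linarith [hTα i], by linarith [hTβ i]⟩
  have hTΩ : ∀ i, T i ∈ Ω := fun i => hsub (hTm i)
  obtain ⟨y, w, h, hw, hh, ⟨d, hd, hdw⟩, hy, hFeq⟩ :=
    exists_eq_gaussian_add_mul_deriv hΩ hΩc hΩb hTΩ hψ hp hq hc hqc hψT hpT hF
  obtain ⟨B, hB0, hB⟩ := exists_norm_integral_mul_deriv_mul_osc_sub_le hsub hTm hψ hp
    (hq.of_le zero_le_three) hc hqc hpT hh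
  obtain ⟨M, hM0, hM⟩ := hF.unifBddOn.exists_nonneg
  have hyT : ∀ i, y i (T i) = 0 := fun i =>
    pow_eq_zero_iff two_ne_zero |>.1 (by linarith [hψT i, (hy i _ (hTΩ i)).2])
  have ha : ∀ i, |F i (T i) / √(q i (T i))| ≤ M / √c := fun i => by
    rw [abs_div, abs_of_nonneg (Real.sqrt_nonneg _)]
    exact div_le_div₀ hM0 (hM i _ (hTΩ i)) (Real.sqrt_pos.2 hc)
      (Real.sqrt_le_sqrt (hqc i _ (hTΩ i)))
  refine ⟨M / √c * (2 * √π + 2 * (2 / (d * δ) ^ 3 + 1 / (d * δ))) + B, by positivity,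
    fun i lam hlam => ?_⟩
  have hαβ : α ≤ β := (hTm i).1.trans (hTm i).2
  have hyα := mul_sub_le_sub_of_le_deriv hΩc (fun t ht => (hy i t ht).1) (hdw i)
    (hsub (left_mem_Icc.2 hαβ)) (hTΩ i) (hTm i).1
  have hyβ := mul_sub_le_sub_of_le_deriv hΩc (fun t ht => (hy i t ht).1) (hdw i)
    (hTΩ i) (hsub (right_mem_Icc.2 hαβ)) (hTm i).2
  rw [hyT i] at hyα hyβ
  refine (norm_integral_mul_osc_sub_fresnel_le hΩ ((uIcc_of_le hαβ).trans_subset hsub) (hψ i)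
    (HasDerivAt.continuousOn (hp i)) (hw i) (fun t ht => (hd.trans_le (hdw i t ht)).ne')
    (hh.continuousOn i) (hy i) (hFeq i) (hFα i) (hFβ i) (mul_pos hd hδ)
    (by nlinarith [hTα i]) (by nlinarith [hTβ i]) hlam (hB i lam (one_pos.trans_le hlam))).trans ?_
  gcongr
  exact ha i

lemma fresnel_neg (s lam : ℝ) : fresnel (-s) lam = starRingEnd ℂ (fresnel s lam) := by
  simp [fresnel, ← Complex.exp_conj, Complex.conj_ofNat]

lemma integral_mul_osc_neg (f ψ : ℝ → ℝ) (α β lam : ℝ) :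
    ∫ t in α..β, f t * osc lam (-ψ t) = starRingEnd ℂ (∫ t in α..β, f t * osc lam (ψ t)) := by
  simp only [osc_neg, intervalIntegral, map_sub, ← integral_conj, map_mul, Complex.conj_ofReal]

theorem stationary_phase {s : ι → ℝ} {δ : ℝ} (hΩ : IsOpen Ω) (hΩc : Convex ℝ Ω)
    (hΩb : Bornology.IsBounded Ω) (hsub : Icc α β ⊆ Ω) (hδ : 0 < δ)
    (hT : ∀ i, T i ∈ Icc (α + δ) (β - δ)) (hs : ∀ i, s i = 1 ∨ s i = -1)
    (hψ : ∀ i, ∀ t ∈ Ω, HasDerivAt (ψ i) (p i t) t)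
    (hp : ∀ i, ∀ t ∈ Ω, HasDerivAt (p i) (q i t) t) (hq : UnifContDiffOn 3 q Ω) (hc : 0 < c)
    (hqc : ∀ i, ∀ t ∈ Ω, c ≤ s i * q i t) (hpT : ∀ i, p i (T i) = 0)
    (hF : UnifContDiffOn 3 F Ω) (hFα : ∀ i, F i α = 0) (hFβ : ∀ i, F i β = 0) :
    ∃ B : ℝ, 0 ≤ B ∧ ∀ i, ∀ lam : ℝ, 1 ≤ lam →
      ‖(∫ t in α..β, F i t * osc lam (ψ i t)) - fresnel (s i) lam *
        (F i (T i) / √|q i (T i)| : ℝ) * osc lam (ψ i (T i))‖ ≤ B / (lam * √lam) := by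
  have hTΩ : ∀ i, T i ∈ Ω := fun i =>
    hsub ⟨by linarith [(hT i).1], by linarith [(hT i).2]⟩
  have hs1 : ∃ M, ∀ i, |s i| ≤ M := ⟨1, fun i => by rcases hs i with h | h <;> simp [h]⟩
  obtain ⟨B, hB0, hB⟩ := stationary_phase_of_le_deriv2 (ψ := fun i t => s i * (ψ i t - ψ i (T i)))
    hΩ hΩc hΩb hsub hδ hT (fun i t ht => ((hψ i t ht).sub_const _).const_mul (s i))
    (fun i t ht => (hp i t ht).const_mul (s i)) ((UnifContDiffOn.const hs1).mul hq) hc hqc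
    (fun i => by rw [sub_self, mul_zero]) (fun i => by rw [hpT, mul_zero]) hF hFα hFβ
  refine ⟨B, hB0, fun i lam hlam => ?_⟩
  have habs : |q i (T i)| = s i * q i (T i) := by
    rw [← abs_of_pos (hc.trans_le (hqc i _ (hTΩ i))), abs_mul]
    rcases hs i with h | h <;> simp [h]
  have hsplit : ∫ t in α..β, F i t * osc lam (ψ i t) =
      (∫ t in α..β, F i t * osc lam (ψ i t - ψ i (T i))) * osc lam (ψ i (T i)) := by
    simp only [← intervalIntegral.integral_mul_const, mul_assoc, ← osc_add, sub_add_cancel]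
  rw [hsplit, ← sub_mul, norm_mul, norm_osc, mul_one, habs]
  have hB' := hB i lam hlam
  rcases hs i with h | h
  · simpa only [h, one_mul] using hB'
  · rw [← Complex.norm_conj, map_sub, map_mul, ← integral_mul_osc_neg, ← fresnel_neg,
      Complex.conj_ofReal] at hB'
    simpa only [h, neg_one_mul, neg_neg] using hB'

end StationaryPhase

section IteratedDerivWithin

variable {ι : Type*} {Q : ℝ → ℝ} {a b C t : ℝ} {N j n : ℕ}

lemma hasDerivAt_iteratedDerivWithin_Icc (hQ : ContDiffOn ℝ N Q (Icc a b)) (hj : j < N)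
    (ht : t ∈ Ioo a b) :
    HasDerivAt (iteratedDerivWithin j Q (Icc a b))
      (iteratedDerivWithin (j + 1) Q (Icc a b) t) t := by
  have h := hQ.differentiableOn_iteratedDerivWithin (m := j) (by exact_mod_cast hj)
    (uniqueDiffOn_Icc (ht.1.trans ht.2)) t (Ioo_subset_Icc_self ht)
  rw [iteratedDerivWithin_succ]
  exact h.hasDerivWithinAt.hasDerivAt (Icc_mem_nhds ht.1 ht.2)

lemma hasDerivAt_derivWithin_Icc (hQ : ContDiffOn ℝ N Q (Icc a b)) (hN : 1 ≤ N)
    (ht : t ∈ Ioo a b) : HasDerivAt Q (derivWithin Q (Icc a b) t) t := by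
  simpa only [iteratedDerivWithin_zero, zero_add, iteratedDerivWithin_one] using
    hasDerivAt_iteratedDerivWithin_Icc hQ hN ht

lemma hasDerivAt_derivWithin_Icc_two (hQ : ContDiffOn ℝ N Q (Icc a b)) (hN : 2 ≤ N)
    (ht : t ∈ Ioo a b) :
    HasDerivAt (derivWithin Q (Icc a b)) (iteratedDerivWithin 2 Q (Icc a b) t) t := by
  simpa only [iteratedDerivWithin_one] using hasDerivAt_iteratedDerivWithin_Icc hQ hN ht

lemma unifContDiffOn_iteratedDerivWithin {Q : ι → ℝ → ℝ} (hab : a < b)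
    (hQ : ∀ i, ContDiffOn ℝ N (Q i) (Icc a b))
    (hC : ∀ i, ∀ k ≤ N, ∀ t ∈ Icc a b, |iteratedDerivWithin k (Q i) (Icc a b) t| ≤ C)
    (h : j + n ≤ N) :
    UnifContDiffOn n (fun i => iteratedDerivWithin j (Q i) (Icc a b)) (Ioo a b) := by
  have hb : ∀ j ≤ N, UnifBddOn (fun i => iteratedDerivWithin j (Q i) (Icc a b)) (Ioo a b) :=
    fun j hj => ⟨C, fun i t ht => hC i j hj t (Ioo_subset_Icc_self ht)⟩
  induction n generalizing j with
  | zero => exact ⟨hb j h, fun i => ((hQ i).continuousOn_iteratedDerivWithin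
      (by exact_mod_cast h) (uniqueDiffOn_Icc hab)).mono Ioo_subset_Icc_self⟩
  | succ n ih => exact ⟨hb j (by lia), _,
      fun i t ht => hasDerivAt_iteratedDerivWithin_Icc (hQ i) (by lia) ht, ih (by lia)⟩

end IteratedDerivWithin

/-- The class of phases under consideration: functions of class `C^N` on `[a, b]` whose
derivatives up to order `N` are bounded by `C`, and whose second derivative has absolute value at
least `c`. Derivatives at `a` and `b` are one-sided. -/
structure NondegeneratePhase (N : ℕ) (a b C c : ℝ) (Q : ℝ → ℝ) : Prop where
  contDiffOn : ContDiffOn ℝ N Q (Icc a b)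
  abs_iteratedDerivWithin_le : ∀ k ≤ N, ∀ t ∈ Icc a b, |iteratedDerivWithin k Q (Icc a b) t| ≤ C
  le_abs_iteratedDerivWithin_two : ∀ t ∈ Icc a b, c ≤ |iteratedDerivWithin 2 Q (Icc a b) t|

namespace NondegeneratePhase

variable {N : ℕ} {a b C c : ℝ} {Q : ℝ → ℝ}

lemma exists_sign (h : NondegeneratePhase N a b C c Q) (hN : 2 ≤ N) (hab : a < b) (hc : 0 < c) :
    ∃ s : ℝ, (s = 1 ∨ s = -1) ∧ ∀ t ∈ Icc a b, c ≤ s * iteratedDerivWithin 2 Q (Icc a b) t := by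
  set q := iteratedDerivWithin 2 Q (Icc a b)
  have hq : ContinuousOn q (Icc a b) := h.contDiffOn.continuousOn_iteratedDerivWithin
    (by exact_mod_cast hN) (uniqueDiffOn_Icc hab)
  have hcq : ∀ {t}, t ∈ Icc a b → c ≤ |q t| := h.le_abs_iteratedDerivWithin_two _
  rcases isPreconnected_Icc.eq_or_eq_neg_of_sq_eq hq hq.abs (fun t _ => (sq_abs _).symm)
    (fun ht => (hc.trans_le (hcq ht)).ne') with hs | hs
  · exact ⟨1, Or.inl rfl, fun t ht => by rw [one_mul, hs ht]; exact hcq ht⟩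
  · exact ⟨-1, Or.inr rfl, fun t ht => by
      rw [neg_one_mul, hs ht, Pi.neg_apply, neg_neg]
      exact hcq ht⟩

variable {s : ℝ}

lemma mul_sub_le_derivWithin_sub (h : NondegeneratePhase N a b C c Q) (hN : 2 ≤ N)
    (hs : ∀ t ∈ Icc a b, c ≤ s * iteratedDerivWithin 2 Q (Icc a b) t) {x y : ℝ}
    (hx : x ∈ Ioo a b) (hy : y ∈ Ioo a b) (hxy : x ≤ y) :
    c * (y - x) ≤ s * derivWithin Q (Icc a b) y - s * derivWithin Q (Icc a b) x :=
  mul_sub_le_sub_of_le_deriv (convex_Ioo a b)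
    (fun _ ht => (hasDerivAt_derivWithin_Icc_two h.contDiffOn hN ht).const_mul s)
    (fun t ht => hs t (Ioo_subset_Icc_self ht)) hx hy hxy

lemma injOn_derivWithin (h : NondegeneratePhase N a b C c Q) (hN : 2 ≤ N) (hc : 0 < c) :
    InjOn (derivWithin Q (Icc a b)) (Ioo a b) := by
  intro x hx y hy hxy
  obtain ⟨s, -, hs⟩ := h.exists_sign hN (hx.1.trans hx.2) hc
  wlog hle : x ≤ y generalizing x y
  · exact (this hy hx hxy.symm (le_of_not_ge hle)).symm
  have := h.mul_sub_le_derivWithin_sub hN hs hx hy hle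
  rw [hxy, sub_self] at this
  nlinarith

lemma contDiffAt_leftInverse (h : NondegeneratePhase N a b C c Q) (hN : 2 ≤ N) (hc : 0 < c)
    {g : ℝ → ℝ} (hg : LeftInvOn g (derivWithin Q (Icc a b)) (Ioo a b)) {t : ℝ}
    (ht : t ∈ Ioo a b) : ContDiffAt ℝ (N - 1 : ℕ) g (derivWithin Q (Icc a b) t) := by
  have hp : ContDiffAt ℝ (N - 1 : ℕ) (derivWithin Q (Icc a b)) t :=
    (h.contDiffOn.derivWithin (uniqueDiffOn_Icc (ht.1.trans ht.2))
      (by exact_mod_cast (by lia : N - 1 + 1 ≤ N))).contDiffAt (Icc_mem_nhds ht.1 ht.2)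
  have hq0 := abs_pos.1 (hc.trans_le (h.le_abs_iteratedDerivWithin_two t (Ioo_subset_Icc_self ht)))
  have hd := (hasDerivAt_derivWithin_Icc_two h.contDiffOn hN ht).hasFDerivAt_equiv hq0
  have hn : ((N - 1 : ℕ) : WithTop ℕ∞) ≠ 0 := by exact_mod_cast (by lia : N - 1 ≠ 0)
  have hstrict := hp.hasStrictFDerivAt' hd hn
  refine (hp.to_localInverse hd hn).congr_of_eventuallyEq ?_
  filter_upwards [hstrict.eventually_right_inverse, hstrict.localInverse_continuousAt.eventually
    (by rw [hstrict.localInverse_apply_image]; exact isOpen_Ioo.mem_nhds ht)] with v hv hvmem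
  exact (congrArg g hv).symm.trans (hg hvmem)

lemma exists_criticalPoint (h : NondegeneratePhase N a b C c Q) (hN : 2 ≤ N) (hc : 0 < c)
    {I S : Set ℝ} (hI : I ⊆ Ioo a b) (hS : S ⊆ derivWithin Q (Icc a b) '' I) :
    ∃ T : ℝ × ℝ → ℝ,
      (∀ ξ η : ℝ, η ≠ 0 → -ξ / η ∈ S →
        T (ξ, η) ∈ I ∧ derivWithin Q (Icc a b) (T (ξ, η)) = -ξ / η ∧
        (∀ t' ∈ I, derivWithin Q (Icc a b) t' = -ξ / η → t' = T (ξ, η))) ∧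
      ContDiffOn ℝ (N - 1) T {p : ℝ × ℝ | p.2 ≠ 0 ∧ -p.1 / p.2 ∈ S} := by
  have hinj := h.injOn_derivWithin hN hc
  have hg := hinj.leftInvOn_invFunOn
  set g := Function.invFunOn (derivWithin Q (Icc a b)) (Ioo a b)
  refine ⟨fun p => g (-p.1 / p.2), fun ξ η _ hv => ?_, fun p ⟨hp, hv⟩ => ?_⟩
  · obtain ⟨t, ht, htv⟩ := hS hv
    simp only [← htv]
    rw [hg (hI ht)]
    exact ⟨ht, rfl, fun t' ht' h' => hinj (hI ht') (hI ht) h'⟩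
  · obtain ⟨t, ht, htv⟩ := hS hv
    have hgv := h.contDiffAt_leftInverse hN hc hg (hI ht)
    rw [htv] at hgv
    exact_mod_cast (hgv.comp p (contDiffAt_fst.neg.div contDiffAt_snd hp)).contDiffWithinAt

lemma dichotomy (h : NondegeneratePhase N a b C c Q) (hN : 2 ≤ N) (hab : a < b) (hc : 0 < c)
    {α β d δ : ℝ} (hα : a < α) (hαβ : α ≤ β) (hβ : β < b) (hd : 0 ≤ d)
    {S : Set ℝ} (hS : ∀ v ∈ S, ∀ w ∈ S, |v - w| ≤ δ) :
    (∀ v ∈ S, ∀ t ∈ Icc (α + d) (β - d), c * d - δ ≤ |derivWithin Q (Icc a b) t - v|) ∨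
      S ⊆ derivWithin Q (Icc a b) '' Icc α β := by
  obtain ⟨s, hs1, hs⟩ := h.exists_sign hN hab hc
  set p := derivWithin Q (Icc a b)
  have hs0 : s ≠ 0 := by rcases hs1 with rfl | rfl <;> norm_num
  have hsabs : ∀ x : ℝ, |x| = |s * x| := fun x => by rcases hs1 with rfl | rfl <;> simp
  have hmono : ∀ {x y}, a < x → y < b → x ≤ y → c * (y - x) ≤ s * p y - s * p x :=
    fun hx hy hxy => h.mul_sub_le_derivWithin_sub hN hs ⟨hx, hxy.trans_lt hy⟩
      ⟨hx.trans_le hxy, hy⟩ hxy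
  by_cases hall : ∀ v ∈ S, s * v ∈ Icc (s * p α) (s * p β)
  · refine Or.inr fun v hv => ?_
    have hcont : ContinuousOn (fun t => s * p t) (Icc α β) :=
      HasDerivAt.continuousOn fun t ht => (hasDerivAt_derivWithin_Icc_two h.contDiffOn hN
        ⟨hα.trans_le ht.1, ht.2.trans_lt hβ⟩).const_mul s
    obtain ⟨t, ht, htv⟩ := intermediate_value_Icc hαβ hcont (hall v hv)
    exact ⟨t, ht, mul_left_cancel₀ hs0 htv⟩
  · push Not at hall
    obtain ⟨w, hw, hwn⟩ := hall
    refine Or.inl fun v hv t ht => ?_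
    have hvw := abs_le.1 ((hsabs _).symm.trans_le (hS v hv w hw))
    have hleft := hmono hα (by linarith [ht.2] : t < b) (by linarith [ht.1])
    have hright := hmono (by linarith [ht.1] : a < t) hβ (by linarith [ht.2])
    rw [mul_sub] at hvw
    rw [hsabs, mul_sub]
    rw [mem_Icc, not_and_or, not_le, not_le] at hwn
    rcases hwn with hwn | hwn
    · exact le_trans (by nlinarith [ht.1]) (le_abs_self _)
    · exact le_trans (by nlinarith [ht.2]) (neg_le_abs _)

end NondegeneratePhase

section Applications

variable {ι : Type*} {Q : ι → ℝ → ℝ} {ρ : ℝ → ℝ} {v : ι → ℝ} {a b α β C : ℝ} {N n : ℕ}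

lemma integral_ofReal_mul_eq_intervalIntegral {α' β' : ℝ}
    (hρ : tsupport ρ ⊆ Icc α β) (hα : α' < α) (hβ : β ≤ β') (g : ℝ → ℂ) :
    ∫ t, (ρ t : ℂ) * g t = ∫ t in α'..β', (ρ t : ℂ) * g t := by
  refine (intervalIntegral.integral_eq_integral_of_support_subset fun t ht => ?_).symm
  have ht' := hρ (subset_tsupport ρ (Complex.ofReal_ne_zero.1 (left_ne_zero_of_mul ht)))
  exact ⟨hα.trans_le ht'.1, ht'.2.trans hβ⟩

lemma hasDerivAt_sub_mul_of_mem_Ioo {Q : ℝ → ℝ} {v t : ℝ} (hQ : ContDiffOn ℝ N Q (Icc a b))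
    (hN : 1 ≤ N) (ht : t ∈ Ioo a b) :
    HasDerivAt (fun t => Q t - v * t) (derivWithin Q (Icc a b) t - v) t := by
  simpa using (hasDerivAt_derivWithin_Icc hQ hN ht).fun_sub ((hasDerivAt_id' t).const_mul v)

theorem exists_norm_integral_mul_osc_le (ha : a < α) (hαβ : α ≤ β) (hb : β < b)
    (hQ : ∀ i, ContDiffOn ℝ N (Q i) (Icc a b))
    (hC : ∀ i, ∀ k ≤ N, ∀ t ∈ Icc a b, |iteratedDerivWithin k (Q i) (Icc a b) t| ≤ C)
    (hn : n + 1 ≤ N) (hv : ∃ V, ∀ i, |v i| ≤ V) {δ : ℝ} (hδ : 0 < δ)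
    (hlow : ∀ i, ∀ t ∈ Icc α β, δ ≤ |derivWithin (Q i) (Icc a b) t - v i|)
    (hρ : ContDiff ℝ n ρ) (hρs : tsupport ρ ⊆ Icc α β) :
    ∃ B : ℝ, 0 ≤ B ∧ ∀ i, ∀ lam : ℝ, 0 < lam →
      ‖∫ t, ρ t * osc lam (Q i t - v i * t)‖ ≤ B / lam ^ n := by
  have hp := unifContDiffOn_iteratedDerivWithin (by linarith) hQ hC (j := 1) (n := n) (by lia)
  simp only [iteratedDerivWithin_one] at hp
  obtain ⟨B, hB0, hB⟩ := nonstationary_phase (α := (a + α) / 2) (β := (β + b) / 2) isOpen_Ioo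
    isClosed_Icc
    (ordConnected_Ioo.uIcc_subset ⟨by linarith, by linarith⟩ ⟨by linarith, by linarith⟩)
    (fun h => by linarith [h.1]) (fun h => by linarith [h.2])
    (fun i t ht => hasDerivAt_sub_mul_of_mem_Ioo (hQ i) (by lia) ht) hδ
    (fun i t _ => hlow i t) (hp.sub (UnifContDiffOn.const hv))
    (UnifContDiffOn.of_contDiff (Metric.isBounded_Ioo a b) hρ)
    (fun _ t _ ht => image_eq_zero_of_notMem_tsupport fun h => ht (hρs h))
  refine ⟨B, hB0, fun i lam hlam => ?_⟩
  rw [integral_ofReal_mul_eq_intervalIntegral (α' := (a + α) / 2) (β' := (β + b) / 2) hρs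
    (by linarith) (by linarith)]
  exact hB i lam hlam

theorem exists_norm_integral_mul_osc_sub_le {c : ℝ} {s T : ι → ℝ} (ha : a < α) (hαβ : α ≤ β)
    (hb : β < b) (hQ : ∀ i, NondegeneratePhase N a b C c (Q i)) (hN : 5 ≤ N) (hc : 0 < c)
    (hs1 : ∀ i, s i = 1 ∨ s i = -1)
    (hs : ∀ i, ∀ t ∈ Icc a b, c ≤ s i * iteratedDerivWithin 2 (Q i) (Icc a b) t)
    (hT : ∀ i, T i ∈ Icc α β) (hTv : ∀ i, derivWithin (Q i) (Icc a b) (T i) = v i)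
    (hρ : ContDiff ℝ 3 ρ) (hρs : tsupport ρ ⊆ Icc α β) :
    ∃ B : ℝ, 0 ≤ B ∧ ∀ i, ∀ lam : ℝ, 1 ≤ lam →
      ‖(∫ t, ρ t * osc lam (Q i t - v i * t)) - fresnel (s i) lam *
        (ρ (T i) / √|iteratedDerivWithin 2 (Q i) (Icc a b) (T i)| : ℝ) *
        osc lam (Q i (T i) - v i * T i)‖ ≤ B / (lam * √lam) := by
  have hρ0 : ∀ {t}, t ∉ Icc α β → ρ t = 0 := fun ht =>
    image_eq_zero_of_notMem_tsupport fun h => ht (hρs h)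
  obtain ⟨B, hB0, hB⟩ := stationary_phase (α := (a + α) / 2) (β := (β + b) / 2)
    (δ := min ((α - a) / 2) ((b - β) / 2)) (F := fun _ => ρ) isOpen_Ioo (convex_Ioo a b)
    (Metric.isBounded_Ioo a b) (Icc_subset_Ioo (by linarith) (by linarith))
    (lt_min (by linarith) (by linarith))
    (fun i => ⟨by linarith [min_le_left ((α - a) / 2) ((b - β) / 2), (hT i).1],
      by linarith [min_le_right ((α - a) / 2) ((b - β) / 2), (hT i).2]⟩) hs1
    (fun i t ht => hasDerivAt_sub_mul_of_mem_Ioo (hQ i).contDiffOn (by lia) ht)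
    (fun i t ht => (hasDerivAt_derivWithin_Icc_two (hQ i).contDiffOn (by lia) ht).sub_const _)
    (unifContDiffOn_iteratedDerivWithin (by linarith) (fun i => (hQ i).contDiffOn)
      (fun i => (hQ i).abs_iteratedDerivWithin_le) hN) hc
    (fun i t ht => hs i t (Ioo_subset_Icc_self ht)) (fun i => sub_eq_zero.2 (hTv i))
    (UnifContDiffOn.of_contDiff (Metric.isBounded_Ioo a b) hρ)
    (fun _ => hρ0 fun h => by linarith [h.1]) (fun _ => hρ0 fun h => by linarith [h.2])
  refine ⟨B, hB0, fun i lam hlam => ?_⟩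
  rw [integral_ofReal_mul_eq_intervalIntegral (α' := (a + α) / 2) (β' := (β + b) / 2) hρs
    (by linarith) (by linarith)]
  exact hB i lam hlam

end Applications

/-- The leading contribution to `χ(-ξ/η) I_Q(λ,ξ,η)` of a critical point `t` of the phase at which
the second derivative of `Q` has the value `q` and the sign `s`. -/
def stationaryTerm (χ ρ Q : ℝ → ℝ) (A s lam ξ η t q : ℝ) : ℂ :=
  Complex.exp (Complex.I * s * π / 4) * (√(2 * π) : ℝ) * (χ (-ξ / η) : ℝ) *
    (Icc (-A) A).indicator (fun _ => (1 : ℂ)) (ξ / η) * (ρ t : ℝ) * (|q| ^ (-(1 / 2 : ℝ)) : ℝ) *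
    Complex.exp (Complex.I * lam * phaseQ Q t ξ η) * (lam ^ (-(1 / 2 : ℝ)) : ℝ)

section OscillatoryIntegral

variable {ρ χ : ℝ → ℝ} {M a b α β c : ℝ} {N : ℕ}

lemma phaseQ_eq (Q : ℝ → ℝ) (t ξ η : ℝ) : phaseQ Q t ξ η = Q t - -ξ / η * t := by
  rw [phaseQ]
  ring

lemma oscI_eq_indicator_mul_integral (hρ : tsupport ρ ⊆ Ioi 0) (Q : ℝ → ℝ)
    (A lam ξ η : ℝ) :
    oscI ρ Q A lam ξ η = (Icc (-A) A).indicator (fun _ => (1 : ℂ)) (ξ / η) *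
      ∫ t, ρ t * osc lam (Q t - -ξ / η * t) := by
  simp only [oscI, phaseQ_eq]
  congr 1
  refine setIntegral_eq_integral_of_forall_compl_eq_zero fun t ht => ?_
  rw [image_eq_zero_of_notMem_tsupport fun h => ht (hρ h), Complex.ofReal_zero, zero_mul]

lemma rpow_neg_natCast_sub_one (hN : 1 ≤ N) {x : ℝ} (hx : 0 ≤ x) :
    x ^ (-((N : ℝ) - 1)) = (x ^ (N - 1))⁻¹ := by
  rw [rpow_neg hx, ← rpow_natCast, Nat.cast_sub hN, Nat.cast_one]

lemma rpow_neg_half {x : ℝ} (hx : 0 ≤ x) : x ^ (-(1 / 2 : ℝ)) = (√x)⁻¹ := by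
  rw [rpow_neg hx, sqrt_eq_rpow]

lemma rpow_neg_three_halves {x : ℝ} (hx : 0 ≤ x) : x ^ (-(3 / 2 : ℝ)) = (x * √x)⁻¹ := by
  rw [rpow_neg hx, sqrt_eq_rpow, ← rpow_one_add' hx (by norm_num)]
  norm_num

lemma norm_mul_indicator_one_mul_le {S : Set ℝ} (hχ : ∀ x, |χ x| ≤ M) (x y : ℝ) {z : ℂ} {r : ℝ}
    (hz : ‖z‖ ≤ r) : ‖(χ x : ℂ) * (S.indicator (fun _ => (1 : ℂ)) y * z)‖ ≤ M * r := by
  have hind : ‖S.indicator (fun _ => (1 : ℂ)) y‖ ≤ 1 := by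
    simpa using norm_indicator_le_norm_self (s := S) (fun _ => (1 : ℂ)) y
  rw [norm_mul, norm_mul, Complex.norm_real, norm_eq_abs]
  calc |χ x| * (‖S.indicator (fun _ => (1 : ℂ)) y‖ * ‖z‖) ≤ |χ x| * (1 * ‖z‖) := by gcongr
    _ = |χ x| * ‖z‖ := by rw [one_mul]
    _ ≤ M * r := mul_le_mul (hχ x) hz (norm_nonneg z) ((abs_nonneg _).trans (hχ x))

theorem exists_norm_mul_oscI_le {δ : ℝ} (ha : a < α) (hαβ : α ≤ β) (hb : β < b)
    (hN : 1 ≤ N) (hδ : 0 < δ) (hρ : ContDiff ℝ (N - 1 : ℕ) ρ) (hρs : tsupport ρ ⊆ Icc α β)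
    (hρ0 : tsupport ρ ⊆ Ioi 0) (hχ : ∀ x, |χ x| ≤ M)
    (hχb : Bornology.IsBounded (tsupport χ)) (A C c : ℝ) :
    ∃ B : ℝ, 0 ≤ B ∧ ∀ Q, NondegeneratePhase N a b C c Q →
      (∀ v ∈ tsupport χ, ∀ t ∈ Icc α β, δ ≤ |derivWithin Q (Icc a b) t - v|) →
      ∀ lam ξ η : ℝ, 0 < lam →
        ‖(χ (-ξ / η) : ℂ) * oscI ρ Q A lam ξ η‖ ≤ B * lam ^ (-((N : ℝ) - 1)) := by
  have hM0 : 0 ≤ M := (abs_nonneg _).trans (hχ 0)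
  obtain ⟨V, hV⟩ := isBounded_iff_forall_norm_le.1 hχb
  obtain ⟨B, hB0, hB⟩ := exists_norm_integral_mul_osc_le (n := N - 1)
    (ι := {x : (ℝ → ℝ) × ℝ // NondegeneratePhase N a b C c x.1 ∧ |x.2| ≤ V ∧
      ∀ t ∈ Icc α β, δ ≤ |derivWithin x.1 (Icc a b) t - x.2|})
    ha hαβ hb (fun i => i.2.1.contDiffOn) (fun i => i.2.1.abs_iteratedDerivWithin_le) (by lia)
    ⟨V, fun i => i.2.2.1⟩ hδ (fun i => i.2.2.2) hρ hρs
  refine ⟨M * B, by positivity, fun Q hQ hfar lam ξ η hlam => ?_⟩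
  by_cases hv : -ξ / η ∈ tsupport χ
  · rw [oscI_eq_indicator_mul_integral hρ0,
      rpow_neg_natCast_sub_one hN hlam.le, ← div_eq_mul_inv, mul_div_assoc]
    exact norm_mul_indicator_one_mul_le hχ _ _
      (hB ⟨(Q, -ξ / η), hQ, hV _ hv, hfar _ hv⟩ lam hlam)
  · rw [image_eq_zero_of_notMem_tsupport hv, Complex.ofReal_zero, zero_mul, norm_zero]
    positivity

theorem exists_norm_mul_oscI_sub_le (ha : a < α) (hαβ : α ≤ β) (hb : β < b)
    (hN : 5 ≤ N) (hc : 0 < c) (hρ : ContDiff ℝ 3 ρ) (hρs : tsupport ρ ⊆ Icc α β)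
    (hρ0 : tsupport ρ ⊆ Ioi 0) (hχ : ∀ x, |χ x| ≤ M) (A C : ℝ) :
    ∃ B : ℝ, 0 ≤ B ∧ ∀ Q, NondegeneratePhase N a b C c Q → ∀ s : ℝ, (s = 1 ∨ s = -1) →
      (∀ t ∈ Icc a b, c ≤ s * iteratedDerivWithin 2 Q (Icc a b) t) →
      ∀ lam ξ η T : ℝ, 1 ≤ lam → T ∈ Icc α β → derivWithin Q (Icc a b) T = -ξ / η →
        ‖(χ (-ξ / η) : ℂ) * oscI ρ Q A lam ξ η -
          stationaryTerm χ ρ Q A s lam ξ η T (iteratedDerivWithin 2 Q (Icc a b) T)‖ ≤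
          B * lam ^ (-(3 / 2 : ℝ)) := by
  obtain ⟨B, hB0, hB⟩ := exists_norm_integral_mul_osc_sub_le
    (ι := {x : (ℝ → ℝ) × ℝ × ℝ // NondegeneratePhase N a b C c x.1 ∧ (x.2.1 = 1 ∨ x.2.1 = -1) ∧
      (∀ t ∈ Icc a b, c ≤ x.2.1 * iteratedDerivWithin 2 x.1 (Icc a b) t) ∧ x.2.2 ∈ Icc α β})
    ha hαβ hb (fun i => i.2.1) hN hc (fun i => i.2.2.1) (fun i => i.2.2.2.1)
    (fun i => i.2.2.2.2) (fun _ => rfl) hρ hρs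
  refine ⟨M * B, mul_nonneg ((abs_nonneg _).trans (hχ 0)) hB0,
    fun Q hQ s hs1 hs lam ξ η T hlam hT hTv => ?_⟩
  have h := norm_mul_indicator_one_mul_le (S := Icc (-A) A) hχ (-ξ / η) (ξ / η)
    (hB ⟨(Q, s, T), hQ, hs1, hs, hT⟩ lam hlam)
  rw [hTv] at h
  have hlam0 : 0 ≤ lam := zero_le_one.trans hlam
  rw [oscI_eq_indicator_mul_integral hρ0, stationaryTerm,
    rpow_neg_half hlam0, rpow_neg_half (abs_nonneg _), rpow_neg_three_halves hlam0, phaseQ_eq]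
  refine (congrArg norm ?_).trans_le (h.trans_eq (by rw [← mul_div_assoc, div_eq_mul_inv]))
  simp only [fresnel, osc]
  push_cast
  ring

end OscillatoryIntegral

theorem stationary_phase_dichotomy_general
    (ρ : ℝ → ℝ) (N : ℕ) (hN : 5 ≤ N) (hρ : ContDiff ℝ (N - 1 : ℕ) ρ)
    (hρ0 : tsupport ρ ⊆ Ioi 0) (A a b α β d : ℝ) (ha : a < α) (hb : β < b) (hd : 0 ≤ d)
    (hαβ : α + d ≤ β - d) (hρs : tsupport ρ ⊆ Icc (α + d) (β - d)) (C c δ : ℝ) (hc : 0 < c)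
    (hδ : δ < c * d) (χ : ℝ → ℝ) (M : ℝ) (hχ : ∀ x, |χ x| ≤ M)
    (hχδ : ∀ v ∈ tsupport χ, ∀ w ∈ tsupport χ, |v - w| ≤ δ) :
    ∃ B : ℝ, 0 < B ∧ ∀ Q : ℝ → ℝ, NondegeneratePhase N a b C c Q →
      ((∀ lam ξ η : ℝ, 0 < lam → η ≠ 0 →
          ‖(χ (-ξ / η) : ℂ) * oscI ρ Q A lam ξ η‖ ≤ B * lam ^ (-((N : ℝ) - 1))) ∨
      (∃ T : ℝ × ℝ → ℝ,
        (∀ ξ η : ℝ, η ≠ 0 → -ξ / η ∈ tsupport χ →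
          T (ξ, η) ∈ Icc α β ∧ derivWithin Q (Icc a b) (T (ξ, η)) = -ξ / η ∧
          (∀ t' ∈ Icc α β, derivWithin Q (Icc a b) t' = -ξ / η → t' = T (ξ, η))) ∧
        ContDiffOn ℝ (N - 1) T {p : ℝ × ℝ | p.2 ≠ 0 ∧ -p.1 / p.2 ∈ tsupport χ} ∧
        ∃ s : ℝ, (s = 1 ∨ s = -1) ∧
          (∀ t ∈ Icc a b, 0 < s * iteratedDerivWithin 2 Q (Icc a b) t) ∧
          ∀ lam ξ η : ℝ, 1 ≤ lam → η ≠ 0 → -ξ / η ∈ tsupport χ →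
            ‖(χ (-ξ / η) : ℂ) * oscI ρ Q A lam ξ η -
              stationaryTerm χ ρ Q A s lam ξ η (T (ξ, η))
                (iteratedDerivWithin 2 Q (Icc a b) (T (ξ, η)))‖ ≤
              B * lam ^ (-(3 / 2 : ℝ)))) := by
  have hαβ' : α ≤ β := by linarith
  have hab : a < b := by linarith
  obtain ⟨B₁, hB₁0, hB₁⟩ := exists_norm_mul_oscI_le (a := a) (b := b) (by linarith) hαβ
    (by linarith) (by lia) (sub_pos.2 hδ) hρ hρs hρ0 hχ
    (Metric.isBounded_iff.2 ⟨δ, fun v hv w hw => hχδ v hv w hw⟩) A C c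
  obtain ⟨B₂, hB₂0, hB₂⟩ := exists_norm_mul_oscI_sub_le ha hαβ' hb hN hc
    (hρ.of_le (by exact_mod_cast (by lia : 3 ≤ N - 1)))
    (hρs.trans (Icc_subset_Icc (by linarith) (by linarith))) hρ0 hχ A C
  refine ⟨B₁ + B₂ + 1, by positivity, fun Q hQ => ?_⟩
  rcases hQ.dichotomy (by lia) hab hc ha hαβ' hb hd hχδ with hfar | hcrit
  · refine Or.inl fun lam ξ η hlam _ => (hB₁ Q hQ hfar lam ξ η hlam).trans ?_
    gcongr
    linarith
  · obtain ⟨T, hT, hTd⟩ := hQ.exists_criticalPoint (by lia) hc (Icc_subset_Ioo ha hb) hcrit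
    obtain ⟨s, hs1, hs⟩ := hQ.exists_sign (by lia) hab hc
    refine Or.inr ⟨T, hT, hTd, s, hs1, fun t ht => hc.trans_le (hs t ht),
      fun lam ξ η hlam hη hv => ?_⟩
    obtain ⟨hTm, hTv, -⟩ := hT ξ η hη hv
    refine (hB₂ Q hQ s hs1 hs lam ξ η _ hlam hTm hTv).trans ?_
    gcongr
    linarith

/-- Stationary-phase dichotomy for the oscillatory integral `I_Q`. -/
theorem stationary_phase_dichotomy
    (ρ : ℝ → ℝ) (hρ : ContDiff ℝ (⊤ : ℕ∞) ρ) (hρsupp : tsupport ρ ⊆ Set.Icc (1/2 : ℝ) 2)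
    (A : ℝ) (hA : 1 < A) (N : ℕ) (hN : 5 ≤ N) (C₁ : ℝ) (hC₁ : 1 ≤ C₁) (c₁ : ℝ) (hc₁ : 0 < c₁)
    (χ : ℝ → ℝ) (hχ : ContDiff ℝ (⊤ : ℕ∞) χ) (hχc : HasCompactSupport χ)
    (a : ℝ) (hχsupp : tsupport χ ⊆ Set.Icc a (a + c₁ / 12)) :
    ∃ B : ℝ, 0 < B ∧
      ∀ Q : ℝ → ℝ, ContDiffOn ℝ N Q (Set.Icc (1/4 : ℝ) 4) →
        (∀ k : ℕ, k ≤ N → ∀ t ∈ Set.Icc (1/4 : ℝ) 4,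
          |iteratedDerivWithin k Q (Set.Icc (1/4 : ℝ) 4) t| ≤ C₁) →
        (∀ t ∈ Set.Icc (1/4 : ℝ) 4,
          c₁ ≤ |iteratedDerivWithin 2 Q (Set.Icc (1/4 : ℝ) 4) t|) →
        -- alternative (1): the whole expression is `O(λ^{-(N-1)})`
        ((∀ lam ξ η : ℝ, 1 < lam → η ≠ 0 →
            ‖(χ (-ξ / η) : ℂ) * oscI ρ Q A lam ξ η‖ ≤ B * lam ^ (-((N : ℝ) - 1))) ∨
        -- alternative (2): a nondegenerate critical point exists and stationary phase applies
        (∃ T : ℝ × ℝ → ℝ,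
          (∀ ξ η : ℝ, η ≠ 0 → -ξ / η ∈ tsupport χ →
            T (ξ, η) ∈ Set.Icc (1/3 : ℝ) (13/6) ∧
            derivWithin Q (Set.Icc (1/4 : ℝ) 4) (T (ξ, η)) = -ξ / η ∧
            (∀ t' ∈ Set.Icc (1/3 : ℝ) (13/6),
              derivWithin Q (Set.Icc (1/4 : ℝ) 4) t' = -ξ / η → t' = T (ξ, η))) ∧
          ContDiffOn ℝ (N - 1) T {p : ℝ × ℝ | p.2 ≠ 0 ∧ -p.1 / p.2 ∈ tsupport χ} ∧
          ∃ s : ℝ, (s = 1 ∨ s = -1) ∧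
            (∀ t ∈ Set.Icc (1/4 : ℝ) 4,
              0 < s * iteratedDerivWithin 2 Q (Set.Icc (1/4 : ℝ) 4) t) ∧
            ∀ lam ξ η : ℝ, 1 < lam → η ≠ 0 → -ξ / η ∈ tsupport χ →
              ‖(χ (-ξ / η) : ℂ) * oscI ρ Q A lam ξ η -
                Complex.exp (Complex.I * s * π / 4) * (Real.sqrt (2 * π) : ℝ) *
                  (χ (-ξ / η) : ℝ) *
                  Set.indicator (Set.Icc (-A) A) (fun _ => (1 : ℂ)) (ξ / η) *
                  (ρ (T (ξ, η)) : ℝ) *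
                  ((|iteratedDerivWithin 2 Q (Set.Icc (1/4 : ℝ) 4) (T (ξ, η))| ^
                      (-(1/2 : ℝ)) : ℝ)) *
                  Complex.exp (Complex.I * lam * phaseQ Q (T (ξ, η)) ξ η) *
                  (lam ^ (-(1/2 : ℝ)) : ℝ)‖ ≤ B * lam ^ (-(3/2 : ℝ)))) := by
  obtain ⟨M, hM⟩ := hχc.exists_bound_of_continuous hχ.continuous
  obtain ⟨B, hB0, hB⟩ := stationary_phase_dichotomy_general ρ N hN
    (contDiff_infty.1 hρ (N - 1)) (fun t ht => one_half_pos.trans_le (hρsupp ht).1) A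
    (1 / 4) 4 (1 / 3) (13 / 6) (1 / 6) (by norm_num) (by norm_num) (by norm_num) (by norm_num)
    (by norm_num [hρsupp]) C₁ c₁ (c₁ / 12) hc₁ (by linarith) χ M hM fun v hv w hw => by
      simpa [Real.dist_eq] using Real.dist_le_of_mem_Icc (hχsupp hv) (hχsupp hw)
  exact ⟨B, hB0, fun Q hQ hQb hQl => (hB Q ⟨hQ, hQb, hQl⟩).imp
    (fun h lam ξ η hlam => h lam ξ η (one_pos.trans hlam))
    fun ⟨T, hT, hTd, s, hs1, hs, h⟩ =>
      ⟨T, hT, hTd, s, hs1, hs, fun lam ξ η hlam => h lam ξ η hlam.le⟩⟩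

end
end

section
/- Let 0 < A₁ < 1/2, 0 < c₀ < A₁/4, C₁ ≥ 1, c₁ > 0 and let N ≥ 5 be an integer. Let γ : ℝ → ℝ be N times continuously differentiable on (−A₁,A₁)∖{0} with γ′(t) ≠ 0 there, and set Q_ε(t) = γ(εt)/(ε γ′(ε)). Assume that for all 0 < |ε| < c₀ and all 1/4 ≤ |t| ≤ 4: |Q_ε^{(j)}(t)| ≤ C₁ for 0 ≤ j ≤ N and |Q_ε″(t)| ≥ c₁. Then there exist constants K₁, K₂ > 0 such that either |γ′(ε)| ≤ K₁ |ε|^{c₁} for all 0 < |ε| < c₀, or |γ′(ε)| ≥ K₂ |ε|^{−c₁} for all 0 < |ε| < c₀. -/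
open MeasureTheory Real Set

noncomputable section

/-- `Qc γ ε t = γ(εt)/(ε γ'(ε))`. -/
def Qc (γ : ℝ → ℝ) (ε t : ℝ) : ℝ := γ (ε * t) / (ε * deriv γ ε)

/-!
Since `Q_ε″(1) = ε γ″(ε) / γ′(ε)`, the lower bound on `Q_ε″` says that the logarithmic derivative of
`γ′` is at least `c₁ / ε` in absolute value. By Darboux's theorem it has constant sign on `(0, c₀)`,
so there it dominates the logarithmic derivative `c₁ / ε` of `ε ^ c₁`, or is dominated by that of
`ε ^ (-c₁)`; integrating gives the two alternatives for `ε > 0`. They carry over to `ε < 0` because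
`Q_ε′(-1) = γ′(-ε) / γ′(ε)` is bounded.
-/

theorem forall_le_or_forall_le_neg_of_le_abs_hasDerivWithinAt {f f' φ : ℝ → ℝ} {s : Set ℝ}
    (hs : Convex ℝ s) (hf : ∀ x ∈ s, HasDerivWithinAt f (f' x) s x) (hφ : ∀ x ∈ s, 0 < φ x)
    (hle : ∀ x ∈ s, φ x ≤ |f' x|) :
    (∀ x ∈ s, φ x ≤ f' x) ∨ ∀ x ∈ s, f' x ≤ -φ x := by
  have hne : ∀ x ∈ s, f' x ≠ 0 := fun x hx ↦ abs_pos.mp ((hφ x hx).trans_le (hle x hx))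
  rcases hasDerivWithinAt_forall_lt_or_forall_gt_of_forall_ne hs hf hne with hneg | hpos
  · exact .inr fun x hx ↦ le_neg_of_le_neg (abs_of_neg (hneg x hx) ▸ hle x hx)
  · exact .inl fun x hx ↦ abs_of_pos (hpos x hx) ▸ hle x hx

theorem abs_mul_abs_le_of_logDeriv_le {f g : ℝ → ℝ} {x y : ℝ} (hxy : x ≤ y)
    (hf : ContinuousOn f (Icc x y)) (hf' : DifferentiableOn ℝ f (Ioo x y))
    (hf0 : ∀ z ∈ Icc x y, f z ≠ 0)
    (hg : ContinuousOn g (Icc x y)) (hg' : DifferentiableOn ℝ g (Ioo x y))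
    (hg0 : ∀ z ∈ Icc x y, g z ≠ 0)
    (hle : ∀ z ∈ Ioo x y, logDeriv f z ≤ logDeriv g z) :
    |f y| * |g x| ≤ |f x| * |g y| := by
  have hderiv : ∀ z ∈ Ioo x y,
      HasDerivAt (fun w ↦ log (g w) - log (f w)) (logDeriv g z - logDeriv f z) z := fun z hz ↦
    ((hg'.hasDerivAt (isOpen_Ioo.mem_nhds hz)).log (hg0 z (Ioo_subset_Icc_self hz))).sub
      ((hf'.hasDerivAt (isOpen_Ioo.mem_nhds hz)).log (hf0 z (Ioo_subset_Icc_self hz)))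
  have hmono : MonotoneOn (fun w ↦ log (g w) - log (f w)) (Icc x y) := by
    refine monotoneOn_of_hasDerivWithinAt_nonneg (convex_Icc x y)
      ((hg.log hg0).sub (hf.log hf0)) (f' := fun z ↦ logDeriv g z - logDeriv f z) ?_ ?_ <;>
      rw [interior_Icc]
    · exact fun z hz ↦ (hderiv z hz).hasDerivWithinAt
    · exact fun z hz ↦ sub_nonneg.mpr (hle z hz)
  have hx : x ∈ Icc x y := left_mem_Icc.mpr hxy
  have hy : y ∈ Icc x y := right_mem_Icc.mpr hxy
  rw [← exp_log_eq_abs (hf0 x hx), ← exp_log_eq_abs (hf0 y hy), ← exp_log_eq_abs (hg0 x hx),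
    ← exp_log_eq_abs (hg0 y hy), ← exp_add, ← exp_add, exp_le_exp]
  linarith only [hmono hx hy hxy]

theorem logDeriv_rpow_const (p : ℝ) {x : ℝ} (hx : 0 < x) :
    logDeriv (fun y : ℝ ↦ y ^ p) x = p / x := by
  rw [logDeriv_apply, Real.deriv_rpow_const, rpow_sub_one hx.ne']
  field_simp [(rpow_pos_of_pos hx p).ne']

section PowerBounds

variable {g : ℝ → ℝ}

theorem abs_le_mul_div_rpow_of_div_le_logDeriv {x y : ℝ} (p : ℝ) (hx : 0 < x) (hxy : x ≤ y)
    (hg : ContinuousOn g (Icc x y)) (hg' : DifferentiableOn ℝ g (Ioo x y))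
    (hg0 : ∀ z ∈ Icc x y, g z ≠ 0) (hle : ∀ z ∈ Ioo x y, p / z ≤ logDeriv g z) :
    |g x| ≤ |g y| * (x / y) ^ p := by
  have hpos : ∀ z ∈ Icc x y, 0 < z := fun z hz ↦ hx.trans_le hz.1
  have hy : 0 < y := hx.trans_le hxy
  have hcmp : |y ^ p| * |g x| ≤ |x ^ p| * |g y| :=
    abs_mul_abs_le_of_logDeriv_le hxy
      (continuousOn_id.rpow_const fun z hz ↦ .inl (hpos z hz).ne')
      (differentiableOn_id.rpow_const fun z hz ↦ .inl (hpos z (Ioo_subset_Icc_self hz)).ne')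
      (fun z hz ↦ (rpow_pos_of_pos (hpos z hz) p).ne') hg hg' hg0
      fun z hz ↦ (logDeriv_rpow_const p (hpos z (Ioo_subset_Icc_self hz))).trans_le (hle z hz)
  rw [abs_of_pos (rpow_pos_of_pos hx p), abs_of_pos (rpow_pos_of_pos hy p)] at hcmp
  rwa [div_rpow hx.le hy.le, ← mul_div_assoc, le_div_iff₀' (rpow_pos_of_pos hy p), mul_comm |g y|]

theorem mul_div_rpow_le_abs_of_logDeriv_le_div {x y : ℝ} (p : ℝ) (hx : 0 < x) (hxy : x ≤ y)
    (hg : ContinuousOn g (Icc x y)) (hg' : DifferentiableOn ℝ g (Ioo x y))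
    (hg0 : ∀ z ∈ Icc x y, g z ≠ 0) (hle : ∀ z ∈ Ioo x y, logDeriv g z ≤ p / z) :
    |g y| * (x / y) ^ p ≤ |g x| := by
  have hpos : ∀ z ∈ Icc x y, 0 < z := fun z hz ↦ hx.trans_le hz.1
  have hy : 0 < y := hx.trans_le hxy
  have hcmp : |g y| * |x ^ p| ≤ |g x| * |y ^ p| :=
    abs_mul_abs_le_of_logDeriv_le hxy hg hg' hg0
      (continuousOn_id.rpow_const fun z hz ↦ .inl (hpos z hz).ne')
      (differentiableOn_id.rpow_const fun z hz ↦ .inl (hpos z (Ioo_subset_Icc_self hz)).ne')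
      (fun z hz ↦ (rpow_pos_of_pos (hpos z hz) p).ne')
      fun z hz ↦ (hle z hz).trans_eq (logDeriv_rpow_const p (hpos z (Ioo_subset_Icc_self hz))).symm
  rw [abs_of_pos (rpow_pos_of_pos hx p), abs_of_pos (rpow_pos_of_pos hy p)] at hcmp
  rwa [div_rpow hx.le hy.le, ← mul_div_assoc, div_le_iff₀ (rpow_pos_of_pos hy p)]

theorem abs_le_mul_div_rpow_or_mul_div_rpow_neg_le_abs {b c : ℝ} (hc : 0 < c)
    (hg : ContinuousOn g (Ioc 0 b)) (hg' : DifferentiableOn ℝ g (Ioo 0 b))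
    (hg0 : ∀ x ∈ Ioc 0 b, g x ≠ 0) (hle : ∀ x ∈ Ioo 0 b, c / x ≤ |logDeriv g x|) :
    (∀ x ∈ Ioc 0 b, |g x| ≤ |g b| * (x / b) ^ c) ∨
      ∀ x ∈ Ioc 0 b, |g b| * (x / b) ^ (-c) ≤ |g x| := by
  have hlog : ∀ x ∈ Ioo 0 b,
      HasDerivWithinAt (fun y ↦ log (g y)) (logDeriv g x) (Ioo 0 b) x := fun x hx ↦
    ((hg'.hasDerivAt (isOpen_Ioo.mem_nhds hx)).log
      (hg0 x (Ioo_subset_Ioc_self hx))).hasDerivWithinAt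
  have hIcc : ∀ x ∈ Ioc 0 b, Icc x b ⊆ Ioc 0 b := fun x hx z hz ↦ ⟨hx.1.trans_le hz.1, hz.2⟩
  have hIoo : ∀ x ∈ Ioc 0 b, Ioo x b ⊆ Ioo 0 b := fun x hx ↦ Ioo_subset_Ioo_left hx.1.le
  rcases forall_le_or_forall_le_neg_of_le_abs_hasDerivWithinAt (convex_Ioo 0 b) hlog
    (fun x hx ↦ div_pos hc hx.1) hle with hpos | hneg
  · exact .inl fun x hx ↦ abs_le_mul_div_rpow_of_div_le_logDeriv c hx.1 hx.2
      (hg.mono (hIcc x hx)) (hg'.mono (hIoo x hx)) (fun z hz ↦ hg0 z (hIcc x hx hz))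
      fun z hz ↦ hpos z (hIoo x hx hz)
  · exact .inr fun x hx ↦ mul_div_rpow_le_abs_of_logDeriv_le_div (-c) hx.1 hx.2
      (hg.mono (hIcc x hx)) (hg'.mono (hIoo x hx)) (fun z hz ↦ hg0 z (hIcc x hx hz))
      fun z hz ↦ (hneg z (hIoo x hx hz)).trans_eq (neg_div z c).symm

theorem abs_apply_le_mul_of_abs_eq_abs {C x y : ℝ} (hC : 1 ≤ C) (hrefl : |g (-x)| ≤ C * |g x|)
    (hxy : |y| = |x|) : |g y| ≤ C * |g x| := by
  rcases abs_eq_abs.mp hxy with rfl | rfl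
  · exact le_mul_of_one_le_left (abs_nonneg _) hC
  · exact hrefl

theorem exists_abs_le_mul_abs_rpow_or_mul_abs_rpow_neg_le_abs {b c C : ℝ} (hb : 0 < b) (hc : 0 < c)
    (hC : 1 ≤ C) (hg : ContinuousOn g (Ioc 0 b)) (hg' : DifferentiableOn ℝ g (Ioo 0 b))
    (hg0 : ∀ x ∈ Ioc 0 b, g x ≠ 0) (hle : ∀ x ∈ Ioo 0 b, c / x ≤ |logDeriv g x|)
    (hrefl : ∀ x : ℝ, 0 < |x| → |x| < b → |g (-x)| ≤ C * |g x|) :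
    ∃ K₁ K₂ : ℝ, 0 < K₁ ∧ 0 < K₂ ∧
      ((∀ x : ℝ, 0 < |x| → |x| < b → |g x| ≤ K₁ * |x| ^ c) ∨
       (∀ x : ℝ, 0 < |x| → |x| < b → K₂ * |x| ^ (-c) ≤ |g x|)) := by
  have hC0 : 0 < C := one_pos.trans_le hC
  have hgb : 0 < |g b| := abs_pos.mpr (hg0 b (right_mem_Ioc.mpr hb))
  refine ⟨C * (|g b| / b ^ c), |g b| / b ^ (-c) / C, by positivity, by positivity, ?_⟩
  rcases abs_le_mul_div_rpow_or_mul_div_rpow_neg_le_abs hc hg hg' hg0 hle with hupper | hlower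
  · refine .inl fun x h0 hxb ↦ ?_
    calc |g x| ≤ C * |g (|x|)| :=
          abs_apply_le_mul_of_abs_eq_abs hC
            (hrefl (|x|) (by rwa [abs_abs]) (by rwa [abs_abs])) (abs_abs x).symm
      _ ≤ C * (|g b| * (|x| / b) ^ c) := by gcongr; exact hupper (|x|) ⟨h0, hxb.le⟩
      _ = C * (|g b| / b ^ c) * |x| ^ c := by rw [div_rpow h0.le hb.le]; ring
  · refine .inr fun x h0 hxb ↦ ?_
    calc |g b| / b ^ (-c) / C * |x| ^ (-c) = |g b| * (|x| / b) ^ (-c) / C := by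
          rw [div_rpow h0.le hb.le]; ring
      _ ≤ |g (|x|)| / C := by gcongr; exact hlower (|x|) ⟨h0, hxb.le⟩
      _ ≤ |g x| := (div_le_iff₀' hC0).mpr
          (abs_apply_le_mul_of_abs_eq_abs hC (hrefl x h0 hxb) (abs_abs x))

end PowerBounds

theorem deriv_Qc (γ : ℝ → ℝ) {ε : ℝ} (hε : ε ≠ 0) (t : ℝ) :
    deriv (Qc γ ε) t = deriv γ (ε * t) / deriv γ ε := by
  change deriv (fun t ↦ γ (ε * t) / (ε * deriv γ ε)) t = _
  rw [deriv_div_const, deriv_comp_mul_left, smul_eq_mul, mul_div_mul_left _ _ hε]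

theorem iteratedDeriv_two_Qc (γ : ℝ → ℝ) {ε : ℝ} (hε : ε ≠ 0) (t : ℝ) :
    iteratedDeriv 2 (Qc γ ε) t = ε * deriv (deriv γ) (ε * t) / deriv γ ε := by
  rw [iteratedDeriv_succ, iteratedDeriv_one, funext (deriv_Qc γ hε), deriv_div_const,
    deriv_comp_mul_left, smul_eq_mul]

theorem gamma_deriv_dichotomy_general {c₀ C c : ℝ} {γ : ℝ → ℝ} (hc₀ : 0 < c₀) (hC : 1 ≤ C)
    (hc : 0 < c) (hγ' : DifferentiableOn ℝ (deriv γ) (Ioc 0 c₀))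
    (hderiv : ∀ ε : ℝ, 0 < |ε| → |ε| ≤ c₀ → deriv γ ε ≠ 0)
    (hbound : ∀ ε : ℝ, 0 < |ε| → |ε| < c₀ → |deriv (Qc γ ε) (-1)| ≤ C)
    (hlower : ∀ ε ∈ Ioo 0 c₀, c ≤ |iteratedDeriv 2 (Qc γ ε) 1|) :
    ∃ K₁ K₂ : ℝ, 0 < K₁ ∧ 0 < K₂ ∧
      ((∀ ε : ℝ, 0 < |ε| → |ε| < c₀ → |deriv γ ε| ≤ K₁ * |ε| ^ c) ∨
       (∀ ε : ℝ, 0 < |ε| → |ε| < c₀ → K₂ * |ε| ^ (-c) ≤ |deriv γ ε|)) := by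
  refine exists_abs_le_mul_abs_rpow_or_mul_abs_rpow_neg_le_abs hc₀ hc hC hγ'.continuousOn
    (hγ'.mono Ioo_subset_Ioc_self)
    (fun x hx ↦ hderiv x (abs_pos.mpr hx.1.ne') ((abs_of_pos hx.1).trans_le hx.2))
    (fun ε hε ↦ ?_) (fun ε hε hεc ↦ ?_)
  · have h := hlower ε hε
    rwa [iteratedDeriv_two_Qc γ hε.1.ne', mul_one, mul_div_assoc, ← logDeriv_apply, abs_mul,
      abs_of_pos hε.1, ← div_le_iff₀' hε.1] at h
  · have h := hbound ε hε hεc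
    rwa [deriv_Qc γ (abs_pos.mp hε), mul_neg_one, abs_div,
      div_le_iff₀ (abs_pos.mpr (hderiv ε hε hεc.le))] at h

/-- footnote dichotomy: conditions (2.1)–(2.2) force `|γ′(ε)|` to be
either polynomially small or polynomially large as `ε → 0`. -/
theorem gamma_deriv_dichotomy
    (A₁ c₀ C₁ c₁ : ℝ) (N : ℕ)
    (hA₁0 : 0 < A₁) (hA₁ : A₁ < 1/2) (hc₀0 : 0 < c₀) (hc₀ : c₀ < A₁ / 4)
    (hC₁ : 1 ≤ C₁) (hc₁ : 0 < c₁) (hN : 5 ≤ N)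
    (γ : ℝ → ℝ)
    (hsmooth : ContDiffOn ℝ N γ (Set.Ioo (-A₁) A₁ \ {0}))
    (hderiv : ∀ t ∈ Set.Ioo (-A₁) A₁ \ {0}, deriv γ t ≠ 0)
    (hbound : ∀ ε t : ℝ, 0 < |ε| → |ε| < c₀ → 1/4 ≤ |t| → |t| ≤ 4 →
      ∀ k : ℕ, k ≤ N → |iteratedDeriv k (Qc γ ε) t| ≤ C₁)
    (hlower : ∀ ε t : ℝ, 0 < |ε| → |ε| < c₀ → 1/4 ≤ |t| → |t| ≤ 4 →
      c₁ ≤ |iteratedDeriv 2 (Qc γ ε) t|) :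
    ∃ K₁ K₂ : ℝ, 0 < K₁ ∧ 0 < K₂ ∧
      ((∀ ε : ℝ, 0 < |ε| → |ε| < c₀ → |deriv γ ε| ≤ K₁ * |ε| ^ c₁) ∨
       (∀ ε : ℝ, 0 < |ε| → |ε| < c₀ → K₂ * |ε| ^ (-c₁) ≤ |deriv γ ε|)) := by
  have hopen : IsOpen (Ioo (-A₁) A₁ \ {0}) := isOpen_Ioo.sdiff isClosed_singleton
  have hγ' : ContDiffOn ℝ 1 (deriv γ) (Ioo (-A₁) A₁ \ {0}) :=
    hsmooth.deriv_of_isOpen hopen (by exact_mod_cast (by omega : 2 ≤ N))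
  have hmem : ∀ ε : ℝ, 0 < |ε| → |ε| ≤ c₀ → ε ∈ Ioo (-A₁) A₁ \ {0} := fun ε h0 h1 ↦
    ⟨abs_lt.mp (by linarith), abs_pos.mp h0⟩
  exact gamma_deriv_dichotomy_general hc₀0 hC₁ hc₁
    ((hγ'.differentiableOn one_ne_zero).mono fun ε hε ↦
      hmem ε (abs_pos.mpr hε.1.ne') ((abs_of_pos hε.1).trans_le hε.2))
    (fun ε h0 h1 ↦ hderiv ε (hmem ε h0 h1))
    (fun ε h0 h1 ↦ by
      simpa using hbound ε (-1) h0 h1 (by norm_num) (by norm_num) 1 (by omega))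
    (fun ε hε ↦ hlower ε 1 (abs_pos.mpr hε.1.ne') ((abs_of_pos hε.1).trans_lt hε.2)
      (by norm_num) (by norm_num))

end
end
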